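/- arXiv:1803.03588 — 4 statements merged into one kernel-verified Lean document; each statement's English description precedes it below -/
import Mathlib

section
/- There exists a constant c > 0 such that every C₅-free graph G with n > 1 vertices satisfies max(α(G), ω(G)) ≥ 2^{c·√(log n · log log n)}. -/
open SimpleGraph

/-- `G` is `C₅`-free: no induced subgraph of `G` is isomorphic to the 5-cycle. -/
def C5Free {V : Type} (G : SimpleGraph V) : Prop :=
  ¬ Nonempty (cycleGraph 5 ↪g G)


namespace C5Proof

open Classical in
/-- Neighbours of `v` inside the finite set `A`. -/
noncomputable def nb {V : Type} (G : SimpleGraph V) (v : V) (A : Finset V) : Finset V :=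
  A.filter (fun w => G.Adj v w)

open Classical in
/-- Largest size of a stable subset of `U`. -/
noncomputable def al {V : Type} (G : SimpleGraph V) (U : Finset V) : ℕ :=
  (U.powerset.filter (fun S => ∀ a ∈ S, ∀ b ∈ S, ¬ G.Adj a b)).sup Finset.card

/-- Product of stability number and clique number of `U`. -/
noncomputable def gg {V : Type} (G : SimpleGraph V) (U : Finset V) : ℕ :=
  al G U * al Gᶜ U

/-- Elementary form of `C₅`-freeness. -/
def NoC5 {V : Type} (G : SimpleGraph V) : Prop :=
  ∀ a b c d e : V, G.Adj a b → G.Adj b c → G.Adj c d → G.Adj d e → G.Adj e a →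
    ¬ G.Adj a c → ¬ G.Adj a d → ¬ G.Adj b d → ¬ G.Adj b e → ¬ G.Adj c e → False

section

variable {V : Type} {G : SimpleGraph V}

lemma mem_nb {v w : V} {A : Finset V} : w ∈ nb G v A ↔ w ∈ A ∧ G.Adj v w := by
  simp [nb]

lemma nb_subset (v : V) (A : Finset V) : nb G v A ⊆ A :=
  fun _ hw => (mem_nb.1 hw).1

lemma gg_compl (U : Finset V) : gg Gᶜ U = gg G U := by
  unfold gg; rw [compl_compl, mul_comm]

lemma NoC5.compl (h : NoC5 G) : NoC5 Gᶜ := by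
  intro a b c d e h1 h2 h3 h4 h5 h6 h7 h8 h9 h10
  have key : ∀ x y z : V, ¬ Gᶜ.Adj x y → Gᶜ.Adj y z → ¬ Gᶜ.Adj x z → G.Adj x y := by
    intro x y z hxy hyz hxz
    by_contra hn
    apply hxy
    rw [SimpleGraph.compl_adj]
    refine ⟨?_, hn⟩
    rintro rfl
    exact hxz hyz
  have ac := key a c d h6 h3 h7
  have ad := key a d c h7 h3.symm h6
  have bd := key b d e h8 h4 h9
  have be := key b e d h9 h4.symm h8
  have ce := key c e a h10 h5 (fun h => h6 h.symm)
  rw [SimpleGraph.compl_adj] at h1 h2 h3 h4 h5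
  exact h a c e b d ac ce be.symm bd ad.symm (fun h => h5.2 h.symm) h1.2 (fun h => h2.2 h.symm) h3.2 (fun h => h4.2 h.symm)

lemma noC5_of_C5Free (h : C5Free G) : NoC5 G := by
  intro a b c d e h1 h2 h3 h4 h5 h6 h7 h8 h9 h10
  apply h
  have hac : a ≠ c := by rintro rfl; exact h7 h3
  have had : a ≠ d := by rintro rfl; exact h6 h3.symm
  have hbd : b ≠ d := by rintro rfl; exact h9 h4
  have hbe : b ≠ e := by rintro rfl; exact h8 h4.symm
  have hce : c ≠ e := by rintro rfl; exact h6 h5.symm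
  have hab := h1.ne
  have hbc := h2.ne
  have hcd := h3.ne
  have hde := h4.ne
  have hea := h5.ne
  refine ⟨⟨⟨![a, b, c, d, e], ?_⟩, ?_⟩⟩
  · intro i j hij
    fin_cases i <;> fin_cases j <;> simp_all
  · intro i j
    have c5 : ∀ i j : Fin 5, (cycleGraph 5).Adj i j ↔ (i - j = 1 ∨ j - i = 1) := by
      intro i j
      rw [SimpleGraph.cycleGraph_adj]
    rw [c5]
    have h1s := h1.symm
    have h2s := h2.symm
    have h3s := h3.symm
    have h4s := h4.symm
    have h5s := h5.symm
    have h6s : ¬ G.Adj c a := fun h => h6 h.symm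
    have h7s : ¬ G.Adj d a := fun h => h7 h.symm
    have h8s : ¬ G.Adj d b := fun h => h8 h.symm
    have h9s : ¬ G.Adj e b := fun h => h9 h.symm
    have h10s : ¬ G.Adj e c := fun h => h10 h.symm
    change G.Adj (![a, b, c, d, e] i) (![a, b, c, d, e] j) ↔ _
    fin_cases i <;> fin_cases j <;>
      first
      | exact iff_of_true (by assumption) (by decide)
      | exact iff_of_false (by assumption) (by decide)
      | exact iff_of_false (G.loopless.irrefl _) (by decide)

lemma le_al {U S : Finset V} (hS : S ⊆ U) (h : ∀ a ∈ S, ∀ b ∈ S, ¬ G.Adj a b) :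
    S.card ≤ al G U := by
  classical
  unfold al
  apply Finset.le_sup (f := Finset.card)
  simp only [Finset.mem_filter, Finset.mem_powerset]
  exact ⟨hS, h⟩

lemma exists_al (G : SimpleGraph V) (U : Finset V) :
    ∃ S ⊆ U, (∀ a ∈ S, ∀ b ∈ S, ¬ G.Adj a b) ∧ S.card = al G U := by
  classical
  have hne : (U.powerset.filter (fun S => ∀ a ∈ S, ∀ b ∈ S, ¬ G.Adj a b)).Nonempty :=
    ⟨∅, by simp⟩
  obtain ⟨S, hS, h⟩ := Finset.exists_mem_eq_sup _ hne Finset.card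
  simp only [Finset.mem_filter, Finset.mem_powerset] at hS
  refine ⟨S, hS.1, hS.2, ?_⟩
  unfold al
  rw [← h]

lemma al_mono {A B : Finset V} (h : A ⊆ B) : al G A ≤ al G B := by
  obtain ⟨S, hS, h1, h2⟩ := exists_al G A
  rw [← h2]
  exact le_al (hS.trans h) h1

lemma gg_mono {A B : Finset V} (h : A ⊆ B) : gg G A ≤ gg G B :=
  Nat.mul_le_mul (al_mono h) (al_mono h)

lemma one_le_gg {A : Finset V} (h : 1 ≤ A.card) : 1 ≤ gg G A := by
  obtain ⟨v, hv⟩ := Finset.card_pos.1 h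
  have h1 : ∀ H : SimpleGraph V, 1 ≤ al H A := by
    intro H
    have := le_al (G := H) (U := A) (S := {v}) (by simpa using hv) (by simp)
    simpa using this
  exact Nat.mul_le_mul (h1 G) (h1 Gᶜ)

/-- Superadditivity. -/
lemma gg_add {Z A S R : Finset V} (hSZ : S ⊆ Z) (hS : ∀ a ∈ S, ∀ b ∈ S, ¬ G.Adj a b)
    (hSc : S.card = al G Z) (hZ : Z ⊆ R) (hA : A ⊆ R) (hd : ∀ s ∈ S, s ∉ A)
    (hn : ∀ s ∈ S, ∀ a ∈ A, ¬ G.Adj s a) : gg G Z + gg G A ≤ gg G R := by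
  classical
  obtain ⟨T, hT, hT1, hT2⟩ := exists_al G A
  have h1 : al G Z + al G A ≤ al G R := by
    rw [← hSc, ← hT2, ← Finset.card_union_of_disjoint]
    · apply le_al
      · exact Finset.union_subset (hSZ.trans hZ) (hT.trans hA)
      · intro a ha b hb
        rw [Finset.mem_union] at ha hb
        rcases ha with ha | ha <;> rcases hb with hb | hb
        · exact hS a ha b hb
        · exact hn a ha b (hT hb)
        · exact fun h => hn b hb a (hT ha) h.symm
        · exact hT1 a ha b hb
    · rw [Finset.disjoint_left]
      intro s hs hs'
      exact hd s hs (hT hs')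
  have h2 : al Gᶜ Z ≤ al Gᶜ R := al_mono hZ
  have h3 : al Gᶜ A ≤ al Gᶜ R := al_mono hA
  unfold gg
  nlinarith [Nat.mul_le_mul_left (al G Z) h2, Nat.mul_le_mul_left (al G A) h3,
    Nat.mul_le_mul_right (al Gᶜ R) h1]

lemma gg_sum {ι : Type} (T : Finset ι) (B : ι → Finset V) (R : Finset V)
    (hB : ∀ i ∈ T, B i ⊆ R)
    (hd : ∀ i ∈ T, ∀ j ∈ T, i ≠ j → ∀ b ∈ B i, ∀ c ∈ B j, b ≠ c ∧ ¬ G.Adj b c) (x : ℕ)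
    (hx : ∀ i ∈ T, x ≤ gg G (B i)) : T.card * x ≤ gg G R := by
  classical
  induction T using Finset.induction_on generalizing R with
  | empty => simp
  | insert i T hi ih =>
    rw [Finset.card_insert_of_notMem hi]
    have ih' := ih (T.biUnion B) (fun j hj => Finset.subset_biUnion_of_mem B hj)
      (fun j hj l hl => hd j (Finset.mem_insert_of_mem hj) l (Finset.mem_insert_of_mem hl))
      (fun j hj => hx j (Finset.mem_insert_of_mem hj))
    obtain ⟨S, hS1, hS2, hS3⟩ := exists_al G (B i)
    have h1 := hx i (Finset.mem_insert_self _ _)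
    have h2 := gg_add (R := R) (A := T.biUnion B) hS1 hS2 hS3 (hB i (Finset.mem_insert_self _ _))
      (by
        rw [Finset.biUnion_subset]
        exact fun j hj => hB j (Finset.mem_insert_of_mem hj))
      (by
        intro s hs hs'
        rw [Finset.mem_biUnion] at hs'
        obtain ⟨j, hj, hsj⟩ := hs'
        exact (hd i (Finset.mem_insert_self _ _) j (Finset.mem_insert_of_mem hj)
          (by rintro rfl; exact hi hj) s (hS1 hs) s hsj).1 rfl)
      (by
        intro s hs a ha
        rw [Finset.mem_biUnion] at ha
        obtain ⟨j, hj, hsj⟩ := ha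
        exact (hd i (Finset.mem_insert_self _ _) j (Finset.mem_insert_of_mem hj)
          (by rintro rfl; exact hi hj) s (hS1 hs) a hsj).2)
    nlinarith

/-- Ramsey. -/
lemma ramsey (G : SimpleGraph V) : ∀ (N s t : ℕ), s + t = N → ∀ S : Finset V, 2 ^ (s + t) ≤ S.card →
    (∃ T ⊆ S, T.card = s ∧ ∀ a ∈ T, ∀ b ∈ T, a ≠ b → ¬ G.Adj a b) ∨
    (∃ T ⊆ S, T.card = t ∧ ∀ a ∈ T, ∀ b ∈ T, a ≠ b → G.Adj a b) := by
  classical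
  intro N
  induction N with
  | zero =>
    intro s t h S hS
    left
    exact ⟨∅, by simp, by simp; omega, by simp⟩
  | succ N ih =>
    intro s t h S hS
    rcases Nat.eq_zero_or_pos s with rfl | hs
    · left; exact ⟨∅, by simp, by simp, by simp⟩
    rcases Nat.eq_zero_or_pos t with rfl | ht
    · right; exact ⟨∅, by simp, by simp, by simp⟩
    obtain ⟨s, rfl⟩ : ∃ s', s = s' + 1 := ⟨s - 1, by omega⟩
    obtain ⟨t, rfl⟩ : ∃ s', t = s' + 1 := ⟨t - 1, by omega⟩
    have hpos : 0 < S.card := lt_of_lt_of_le (by positivity) hS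
    obtain ⟨v, hv⟩ := Finset.card_pos.1 hpos
    have hsplit : ((S.erase v).filter (fun w => G.Adj v w)).card +
        ((S.erase v).filter (fun w => ¬ G.Adj v w)).card = S.card - 1 := by
      rw [Finset.card_filter_add_card_filter_not, Finset.card_erase_of_mem hv]
    have e1 : 2 ^ (s + 1 + (t + 1)) = 2 * 2 ^ (s + t + 1) := by ring
    have e2 : 0 < 2 ^ (s + t + 1) := by positivity
    by_cases hc : 2 ^ (s + t + 1) ≤ ((S.erase v).filter (fun w => G.Adj v w)).card
    · rcases ih (s + 1) t (by omega) _ (by rw [show s + 1 + t = s + t + 1 by ring]; exact hc) with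
        ⟨T, hT, h1, h2⟩ | ⟨T, hT, h1, h2⟩
      · left
        exact ⟨T, hT.trans ((Finset.filter_subset _ _).trans (Finset.erase_subset _ _)), h1, h2⟩
      · right
        have hvT : v ∉ T := fun h => by simpa using hT h
        refine ⟨insert v T, ?_, ?_, ?_⟩
        · intro a ha
          rcases Finset.mem_insert.1 ha with rfl | ha
          · exact hv
          · exact Finset.mem_of_mem_erase (Finset.mem_filter.1 (hT ha)).1
        · rw [Finset.card_insert_of_notMem hvT, h1]
        · intro a ha b hb hab
          rcases Finset.mem_insert.1 ha with ha | ha <;> rcases Finset.mem_insert.1 hb with hb | hb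
          · exact absurd (ha.trans hb.symm) hab
          · rw [ha]; exact (Finset.mem_filter.1 (hT hb)).2
          · rw [hb]; exact (Finset.mem_filter.1 (hT ha)).2.symm
          · exact h2 a ha b hb hab
    · have hc' : 2 ^ (s + t + 1) ≤ ((S.erase v).filter (fun w => ¬ G.Adj v w)).card := by omega
      rcases ih s (t + 1) (by omega) _ hc' with ⟨T, hT, h1, h2⟩ | ⟨T, hT, h1, h2⟩
      · left
        have hvT : v ∉ T := fun h => by simpa using hT h
        refine ⟨insert v T, ?_, ?_, ?_⟩
        · intro a ha
          rcases Finset.mem_insert.1 ha with rfl | ha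
          · exact hv
          · exact Finset.mem_of_mem_erase (Finset.mem_filter.1 (hT ha)).1
        · rw [Finset.card_insert_of_notMem hvT, h1]
        · intro a ha b hb hab
          rcases Finset.mem_insert.1 ha with ha | ha <;> rcases Finset.mem_insert.1 hb with hb | hb
          · exact absurd (ha.trans hb.symm) hab
          · rw [ha]; exact (Finset.mem_filter.1 (hT hb)).2
          · rw [hb]; exact fun h => (Finset.mem_filter.1 (hT ha)).2 h.symm
          · exact h2 a ha b hb hab
      · right
        exact ⟨T, hT.trans ((Finset.filter_subset _ _).trans (Finset.erase_subset _ _)), h1, h2⟩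

/-- Double counting. -/
lemma sum_nb_comm (A B : Finset V) :
    ∑ a ∈ A, (nb G a B).card = ∑ b ∈ B, (nb G b A).card := by
  classical
  have := Finset.sum_card_bipartiteAbove_eq_sum_card_bipartiteBelow (s := A) (t := B) G.Adj
  simp only [Finset.bipartiteAbove, Finset.bipartiteBelow] at this
  unfold nb
  convert this using 3
  ext b
  simp [G.adj_comm]

open Classical in
/-- The comb lemma. -/
lemma comb (A B : Finset V) (lam K : ℕ) (hA : 0 < A.card)
    (hB : ∀ b ∈ B, A.card ≤ K * (nb G b A).card) :
    ∃ S ⊆ A, (∀ a ∈ S, lam ≤ ((nb G a B).filter (fun b => ∀ a' ∈ S, a' ≠ a → ¬ G.Adj a' b)).card) ∧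
      (B.filter (fun b => ∀ a ∈ S, ¬ G.Adj a b)).card ≤ K * lam := by
  classical
  obtain ⟨S, hS, hmin⟩ := Finset.exists_min_image A.powerset
    (fun S => (B.filter (fun b => ∀ a ∈ S, ¬ G.Adj a b)).card + lam * S.card) ⟨∅, by simp⟩
  rw [Finset.mem_powerset] at hS
  refine ⟨S, hS, ?_, ?_⟩
  · intro a ha
    have h := hmin (S.erase a) (Finset.mem_powerset.2 ((Finset.erase_subset _ _).trans hS))
    have hc : (S.erase a).card + 1 = S.card := Finset.card_erase_add_one ha
    rw [← hc] at h
    have hsub : B.filter (fun b => ∀ a' ∈ S.erase a, ¬ G.Adj a' b) ⊆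
        (B.filter (fun b => ∀ a ∈ S, ¬ G.Adj a b)) ∪
        ((nb G a B).filter (fun b => ∀ a' ∈ S, a' ≠ a → ¬ G.Adj a' b)) := by
      intro b hb
      simp only [Finset.mem_filter, Finset.mem_union, mem_nb, Finset.mem_erase] at hb ⊢
      by_cases hab : G.Adj a b
      · right
        exact ⟨⟨hb.1, hab⟩, fun a' h1 h2 => hb.2 a' ⟨h2, h1⟩⟩
      · left
        refine ⟨hb.1, fun a' h1 => ?_⟩
        by_cases h2 : a' = a
        · rw [h2]; exact hab
        · exact hb.2 a' ⟨h2, h1⟩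
    have h3 := (Finset.card_le_card hsub).trans (Finset.card_union_le _ _)
    rw [Nat.mul_add] at h
    omega
  · set U := B.filter (fun b => ∀ a ∈ S, ¬ G.Adj a b) with hU
    have h1 : ∀ a ∈ A, (nb G a U).card ≤ lam := by
      intro a ha
      have h := hmin (insert a S) (Finset.mem_powerset.2 (Finset.insert_subset ha hS))
      have hc : (insert a S).card ≤ S.card + 1 := Finset.card_insert_le _ _
      have hc' := Nat.mul_le_mul_left lam hc
      have hsub : (B.filter (fun b => ∀ a' ∈ insert a S, ¬ G.Adj a' b)) ⊆ U \ nb G a U := by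
        intro b hb
        simp only [hU, Finset.mem_filter, Finset.mem_sdiff, mem_nb, Finset.mem_insert] at hb ⊢
        exact ⟨⟨hb.1, fun a' h => hb.2 a' (Or.inr h)⟩, fun h => hb.2 a (Or.inl rfl) h.2⟩
      have h3 := Finset.card_le_card hsub
      rw [Finset.card_sdiff_of_subset (nb_subset _ _)] at h3
      have h4 := Finset.card_le_card (nb_subset (G := G) a U)
      rw [Nat.mul_add] at hc'
      omega
    have h2 : ∑ a ∈ A, (nb G a U).card ≤ A.card * lam := by
      simpa using Finset.sum_le_card_nsmul A _ lam h1
    rw [sum_nb_comm] at h2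
    have h3 : U.card * A.card ≤ ∑ b ∈ U, K * (nb G b A).card := by
      simpa using Finset.card_nsmul_le_sum U (fun b => K * (nb G b A).card) A.card
        (fun b hb => hB b (Finset.mem_filter.1 hb).1)
    rw [← Finset.mul_sum] at h3
    have h4 : U.card * A.card ≤ (K * lam) * A.card := by nlinarith
    exact Nat.le_of_mul_le_mul_right h4 hA

open Classical in
/-- Vertices of `R` outside `A` with few neighbours in `A`. -/
noncomputable def bad (G : SimpleGraph V) (K : ℕ) (R A : Finset V) : Finset V :=
  (R \ A).filter (fun v => K * (nb G v A).card ≤ A.card)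

lemma mem_bad {K : ℕ} {R A : Finset V} {v : V} :
    v ∈ bad G K R A ↔ (v ∈ R ∧ v ∉ A) ∧ K * (nb G v A).card ≤ A.card := by
  classical
  simp [bad]

set_option maxHeartbeats 1600000 in
/-- The key dichotomy. -/
lemma dichotomy (h5 : NoC5 G) (M m x k D : ℕ) (hM : 1 ≤ M) (hm : 1 ≤ m) (hD : 1 ≤ D) (hk : 1 ≤ k)
    (hQ : ∀ U : Finset V, m ≤ U.card → x ≤ gg G U) (R : Finset V)
    (hdeg : ∀ v ∈ R, (nb G v R).card ≤ D)
    (h1 : 4 * D * 16 ^ k ≤ R.card) (h2 : 16 * M ^ 2 * m ≤ R.card)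
    (hE : ∀ A ⊆ R, 2 * m ≤ A.card → 4 * (bad G (2 * M) R A).card < R.card) :
    k * x ≤ gg G R := by
  classical
  have hMM : M ≤ M ^ 2 := Nat.le_self_pow (by norm_num) M
  have hMm : M * m ≤ M ^ 2 * m := Nat.mul_le_mul_right m hMM
  have hmM : m ≤ M * m := Nat.le_mul_of_pos_left m hM
  have h16 : 2 * k < 16 ^ k := by
    have : k < 2 ^ k := Nat.lt_two_pow_self
    have h8 : 2 * 2 ^ k ≤ 16 ^ k := by
      calc 2 * 2 ^ k ≤ 8 ^ k * 2 ^ k := by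
            apply Nat.mul_le_mul_right
            calc 2 ≤ 8 ^ 1 := by norm_num
              _ ≤ 8 ^ k := Nat.pow_le_pow_right (by norm_num) hk
        _ = 16 ^ k := by rw [← mul_pow]; norm_num
    omega
  have hkD : 8 * (k * D) + 4 * D ≤ R.card := by
    have : 4 * D * (2 * k + 1) ≤ 4 * D * 16 ^ k := Nat.mul_le_mul_left _ h16
    nlinarith
  have hDkD : D ≤ k * D := Nat.le_mul_of_pos_left D hk
  -- find the vertex v
  obtain ⟨A0, hA0, hA0c⟩ := Finset.exists_subset_card_eq (s := R) (n := R.card / 2) (by omega)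
  have hE0 := hE A0 hA0 (by rw [hA0c]; nlinarith [Nat.div_add_mod R.card 2, Nat.mod_lt R.card (show 2 > 0 by norm_num)])
  have hsd : (R \ A0).card = R.card - R.card / 2 := by
    rw [Finset.card_sdiff_of_subset hA0, hA0c]
  obtain ⟨v, hv, hvb⟩ : ∃ v ∈ R \ A0, v ∉ bad G (2 * M) R A0 := by
    by_contra hcon
    push Not at hcon
    have := Finset.card_le_card (show R \ A0 ⊆ bad G (2 * M) R A0 from hcon)
    omega
  rw [Finset.mem_sdiff] at hv
  have hvdeg : A0.card < 2 * M * (nb G v A0).card := by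
    by_contra hcon
    exact hvb (mem_bad.2 ⟨hv, by omega⟩)
  set A := nb G v R with hA
  have hAR : A ⊆ R := nb_subset _ _
  have hAA0 : (nb G v A0).card ≤ A.card := by
    apply Finset.card_le_card
    intro w hw
    rw [mem_nb] at hw
    exact mem_nb.2 ⟨hA0 hw.1, hw.2⟩
  have hAbig : R.card ≤ 4 * M * A.card := by
    have := Nat.mul_le_mul_left (2 * M) hAA0
    have h3 : A0.card + 1 ≤ 2 * M * A.card := by omega
    have h4 : 4 * M * A.card = 2 * (2 * M * A.card) := by ring
    omega
  have hAD : A.card ≤ D := hdeg v hv.1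
  have hA2m : 2 * m ≤ A.card := by
    have : 4 * M * (2 * m) ≤ 4 * M * A.card := by nlinarith
    exact Nat.le_of_mul_le_mul_left this (by omega)
  have hEA := hE A hAR hA2m
  have hvA : v ∉ A := by rw [hA, mem_nb]; simp
  set B := ((R \ A) \ bad G (2 * M) R A).erase v with hB
  have hBmem : ∀ b ∈ B, b ∈ R ∧ b ≠ v ∧ ¬ G.Adj v b ∧ A.card < 2 * M * (nb G b A).card := by
    intro b hb
    rw [hB, Finset.mem_erase, Finset.mem_sdiff, Finset.mem_sdiff] at hb
    obtain ⟨hbv, ⟨hbR, hbA⟩, hbb⟩ := hb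
    refine ⟨hbR, hbv, fun h => hbA (mem_nb.2 ⟨hbR, h⟩), ?_⟩
    by_contra hcon
    exact hbb (mem_bad.2 ⟨⟨hbR, hbA⟩, by omega⟩)
  have hBR : B ⊆ R := fun b hb => (hBmem b hb).1
  have hBcard : R.card ≤ 2 * B.card := by
    have h3 : (R \ A).card = R.card - A.card := Finset.card_sdiff_of_subset hAR
    have h4 := Finset.le_card_sdiff (bad G (2 * M) R A) (R \ A)
    have h5 : ((R \ A) \ bad G (2 * M) R A).card - 1 ≤ B.card := Finset.pred_card_le_card_erase
    omega
  obtain ⟨S, hSA, hSpriv, hSunc⟩ := comb (G := G) A B (2 * M * m) (2 * M) (by omega)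
    (fun b hb => (hBmem b hb).2.2.2.le)
  -- size of S
  have hScard : 2 ^ (2 * k + 2 * k) ≤ S.card := by
    have hcov : B ⊆ (B.filter (fun b => ∀ a ∈ S, ¬ G.Adj a b)) ∪ S.biUnion (fun a => nb G a R) := by
      intro b hb
      by_cases h : ∀ a ∈ S, ¬ G.Adj a b
      · exact Finset.mem_union_left _ (Finset.mem_filter.2 ⟨hb, h⟩)
      · push Not at h
        obtain ⟨a, ha, hab⟩ := h
        exact Finset.mem_union_right _ (Finset.mem_biUnion.2 ⟨a, ha, mem_nb.2 ⟨hBR hb, hab⟩⟩)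
    have h3 := (Finset.card_le_card hcov).trans (Finset.card_union_le _ _)
    have h4 : (S.biUnion (fun a => nb G a R)).card ≤ S.card * D :=
      Finset.card_biUnion_le_card_mul _ _ _ (fun a ha => hdeg a (hAR (hSA ha)))
    have h6 : 4 * (2 * M * (2 * M * m)) ≤ R.card := by
      have e1 : 4 * (2 * M * (2 * M * m)) = 16 * M ^ 2 * m := by ring
      rw [e1]; exact h2
    have h7 : 4 * D * 16 ^ k ≤ 4 * D * S.card := by
      have e1 : 4 * D * S.card = 4 * (S.card * D) := by ring
      rw [e1]
      clear_value A B
      omega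
    have h8 : 16 ^ k ≤ S.card := Nat.le_of_mul_le_mul_left h7 (by omega)
    have h9 : 2 ^ (2 * k + 2 * k) = 16 ^ k := by
      rw [show 2 * k + 2 * k = 4 * k by ring, pow_mul]; norm_num
    rw [h9]; exact h8
  set P : V → Finset V := fun a => (nb G a B).filter (fun b => ∀ a' ∈ S, a' ≠ a → ¬ G.Adj a' b) with hP
  have hPmem : ∀ a b, b ∈ P a → b ∈ B ∧ G.Adj a b ∧ ∀ a' ∈ S, a' ≠ a → ¬ G.Adj a' b := by
    intro a b hb
    rw [hP] at hb
    simp only [Finset.mem_filter, mem_nb] at hb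
    exact ⟨hb.1.1, hb.1.2, hb.2⟩
  have hPR : ∀ a, P a ⊆ R := fun a b hb => hBR (hPmem a b hb).1
  have hvadj : ∀ a ∈ S, G.Adj v a := fun a ha => (mem_nb.1 (hSA ha)).2
  have hne : ∀ a ∈ S, ∀ a' ∈ S, a ≠ a' → ∀ b ∈ P a, ∀ c ∈ P a', b ≠ c := by
    rintro a ha a' ha' hn b hb c hc rfl
    exact (hPmem a b hb).2.2 a' ha' hn.symm (hPmem a' b hc).2.1
  rcases ramsey G _ (2 * k) (2 * k) rfl S hScard with ⟨T, hTS, hTc, hT⟩ | ⟨T, hTS, hTc, hT⟩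
  · -- stable set
    have := gg_sum (G := G) T P R (fun a _ => hPR a)
      (by
        intro a ha a' ha' hn b hb c hc
        refine ⟨hne a (hTS ha) a' (hTS ha') hn b hb c hc, fun hbc => ?_⟩
        have pb := hPmem a b hb
        have pc := hPmem a' c hc
        have bb := hBmem b pb.1
        have bc := hBmem c pc.1
        exact h5 v a b c a' (hvadj a (hTS ha)) pb.2.1 hbc pc.2.1.symm (hvadj a' (hTS ha')).symm
          bb.2.2.1 bc.2.2.1 (pc.2.2 a (hTS ha) hn) (hT a ha a' ha' hn)
          (fun h => pb.2.2 a' (hTS ha') hn.symm h.symm)) x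
      (by
        intro a ha
        apply hQ
        have := hSpriv a (hTS ha)
        have h3 : m ≤ 2 * M * m := by nlinarith
        exact h3.trans this)
    rw [hTc] at this
    nlinarith
  · -- clique
    set Y := R \ T.biUnion (fun a => insert a (nb G a R)) with hY
    have hYc : R.card ≤ 2 * Y.card := by
      have h3 : (T.biUnion (fun a => insert a (nb G a R))).card ≤ T.card * (D + 1) :=
        Finset.card_biUnion_le_card_mul _ _ _ (fun a ha =>
          (Finset.card_insert_le _ _).trans (Nat.add_le_add_right (hdeg a (hAR (hSA (hTS ha)))) 1))
      have h4 := Finset.le_card_sdiff (T.biUnion (fun a => insert a (nb G a R))) R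
      rw [← hY] at h4
      rw [hTc] at h3
      have h6 : 2 * k * (D + 1) ≤ 4 * (k * D) := by nlinarith
      omega
    have hYmem : ∀ y ∈ Y, y ∈ R ∧ ∀ a ∈ T, y ≠ a ∧ ¬ G.Adj a y := by
      intro y hy
      rw [hY, Finset.mem_sdiff, Finset.mem_biUnion] at hy
      refine ⟨hy.1, fun a ha => ⟨?_, ?_⟩⟩
      · rintro rfl
        exact hy.2 ⟨y, ha, Finset.mem_insert_self _ _⟩
      · intro h
        exact hy.2 ⟨a, ha, Finset.mem_insert_of_mem (mem_nb.2 ⟨hy.1, h⟩)⟩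
    have hPc : ∀ a ∈ T, 2 * M * m ≤ (P a).card := fun a ha => hSpriv a (hTS ha)
    have hbadP : ∀ a ∈ T, 4 * (bad G (2 * M) R (P a)).card ≤ R.card := fun a ha =>
      (hE (P a) (hPR a) (by have := hPc a ha; nlinarith)).le
    obtain ⟨y, hyY, hyb⟩ : ∃ y ∈ Y, (T.filter (fun a => y ∈ bad G (2 * M) R (P a))).card ≤ k := by
      by_contra hcon
      push Not at hcon
      have h3 : Y.card * (k + 1) ≤ ∑ y ∈ Y, (T.filter (fun a => y ∈ bad G (2 * M) R (P a))).card := by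
        simpa using Finset.card_nsmul_le_sum Y _ (k + 1) hcon
      have h4 : ∑ y ∈ Y, (T.filter (fun a => y ∈ bad G (2 * M) R (P a))).card =
          ∑ a ∈ T, (Y.filter (fun y => y ∈ bad G (2 * M) R (P a))).card :=
        Finset.sum_card_bipartiteAbove_eq_sum_card_bipartiteBelow _
      have h6 : ∑ a ∈ T, 4 * (Y.filter (fun y => y ∈ bad G (2 * M) R (P a))).card ≤ T.card * R.card := by
        have := Finset.sum_le_card_nsmul T (fun a => 4 * (Y.filter (fun y => y ∈ bad G (2 * M) R (P a))).card)
          R.card (by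
            intro a ha
            refine le_trans ?_ (hbadP a ha)
            apply Nat.mul_le_mul_left
            apply Finset.card_le_card
            intro y hy
            exact (Finset.mem_filter.1 hy).2)
        simpa using this
      rw [← Finset.mul_sum, hTc, ← h4] at h6
      have h7 : 0 < R.card := by omega
      nlinarith
    have hgood : k ≤ (T.filter (fun a => y ∉ bad G (2 * M) R (P a))).card := by
      have := Finset.card_filter_add_card_filter_not (s := T) (fun a => y ∈ bad G (2 * M) R (P a))
      omega
    have hym := hYmem y hyY
    have := gg_sum (G := Gᶜ) (T.filter (fun a => y ∉ bad G (2 * M) R (P a))) (fun a => nb G y (P a)) R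
      (fun a _ => (nb_subset _ _).trans (hPR a))
      (by
        intro a ha a' ha' hn b hb c hc
        rw [Finset.mem_filter] at ha ha'
        rw [mem_nb] at hb hc
        have hbc := hne a (hTS ha.1) a' (hTS ha'.1) hn b hb.1 c hc.1
        refine ⟨hbc, ?_⟩
        rw [SimpleGraph.compl_adj]
        rintro ⟨-, hbc'⟩
        have pb := hPmem a b hb.1
        have pc := hPmem a' c hc.1
        exact h5 y b a a' c hb.2 pb.2.1.symm (hT a ha.1 a' ha'.1 hn) pc.2.1 hc.2.symm
          (fun h => (hym.2 a ha.1).2 h.symm) (fun h => (hym.2 a' ha'.1).2 h.symm)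
          (fun h => pb.2.2 a' (hTS ha'.1) hn.symm h.symm) hbc'
          (pc.2.2 a (hTS ha.1) hn)) x
      (by
        intro a ha
        rw [Finset.mem_filter] at ha
        rw [gg_compl]
        apply hQ
        have h3 := hPc a ha.1
        have hyP : y ∉ P a := fun h => (hym.2 a ha.1).2 (hPmem a y h).2.1
        have h4 : (P a).card < 2 * M * (nb G y (P a)).card := by
          by_contra hcon
          exact ha.2 (mem_bad.2 ⟨⟨hym.1, hyP⟩, by omega⟩)
        have h6 : 2 * M * m < 2 * M * (nb G y (P a)).card := by omega
        exact (lt_of_mul_lt_mul_left' h6).le)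
    rw [gg_compl] at this
    exact (Nat.mul_le_mul_right x hgood).trans this

lemma iterate (h5 : NoC5 G) (M m x k D : ℕ) (hM : 1 ≤ M) (hm : 1 ≤ m) (hD : 1 ≤ D)
    (hal : ∀ U : Finset V, al G U ≤ M)
    (hQ : ∀ U : Finset V, m ≤ U.card → x ≤ gg G U) :
    ∀ j ≤ k, ∀ R : Finset V, (∀ v ∈ R, (nb G v R).card ≤ D) →
      4 ^ j * (4 * D * 16 ^ k) ≤ R.card → 4 ^ j * (16 * M ^ 2 * m) ≤ R.card → j * x ≤ gg G R := by
  classical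
  intro j
  induction j with
  | zero => intros; simp
  | succ j ih =>
    intro hj R hdeg h1 h2
    have e4 : 1 ≤ 4 ^ (j + 1) := Nat.one_le_pow _ _ (by norm_num)
    by_cases hE : ∀ A ⊆ R, 2 * m ≤ A.card → 4 * (bad G (2 * M) R A).card < R.card
    · have := dichotomy h5 M m x k D hM hm hD (by omega) hQ R hdeg
        ((Nat.le_mul_of_pos_left _ e4).trans h1) ((Nat.le_mul_of_pos_left _ e4).trans h2) hE
      exact (Nat.mul_le_mul_right x hj).trans this
    · push Not at hE
      obtain ⟨A, hAR, hAm, hZ⟩ := hE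
      set Z := bad G (2 * M) R A with hZd
      have hZR : Z ⊆ R := fun z hz => (mem_bad.1 hz).1.1
      have hz := ih (by omega) Z
        (by
          intro v hv
          refine le_trans (Finset.card_le_card ?_) (hdeg v (hZR hv))
          intro w hw
          rw [mem_nb] at hw ⊢
          exact ⟨hZR hw.1, hw.2⟩)
        (by rw [pow_succ] at h1; nlinarith) (by rw [pow_succ] at h2; nlinarith)
      obtain ⟨S, hS1, hS2, hS3⟩ := exists_al G Z
      have hSM : S.card ≤ M := hS3 ▸ hal Z
      set N := S.biUnion (fun s => nb G s A) with hN
      have hNc : 2 * M * N.card ≤ M * A.card := by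
        have h3 : N.card ≤ ∑ s ∈ S, (nb G s A).card := Finset.card_biUnion_le
        have h4 : ∑ s ∈ S, 2 * M * (nb G s A).card ≤ S.card * A.card := by
          simpa using Finset.sum_le_card_nsmul S (fun s => 2 * M * (nb G s A).card) A.card
            (fun s hs => (mem_bad.1 (hS1 hs)).2)
        rw [← Finset.mul_sum] at h4
        calc 2 * M * N.card ≤ 2 * M * ∑ s ∈ S, (nb G s A).card := Nat.mul_le_mul_left _ h3
          _ ≤ S.card * A.card := h4
          _ ≤ M * A.card := Nat.mul_le_mul_right _ hSM
      have hNc' : 2 * N.card ≤ A.card := by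
        have h9 : M * (2 * N.card) ≤ M * A.card := by linarith
        exact Nat.le_of_mul_le_mul_left h9 hM
      have hA' : m ≤ (A \ N).card := by
        have := Finset.le_card_sdiff N A
        omega
      have h3 := gg_add (R := R) (A := A \ N) hS1 hS2 hS3 hZR (Finset.sdiff_subset.trans hAR)
        (fun s hs hs' => (mem_bad.1 (hS1 hs)).1.2 (Finset.mem_sdiff.1 hs').1)
        (fun s hs a ha hsa => by
          rw [Finset.mem_sdiff] at ha
          exact ha.2 (Finset.mem_biUnion.2 ⟨s, hs, mem_nb.2 ⟨ha.1, hsa⟩⟩))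
      have h4 := hQ _ hA'
      rw [Nat.add_mul]
      omega

/-- `U` contains a pair of large sets, sparse to each other in `H`. -/
def SP (H : SimpleGraph V) (d q : ℕ) (U : Finset V) : Prop :=
  ∃ A B : Finset V, A ⊆ U ∧ B ⊆ U ∧ Disjoint A B ∧ q ≤ A.card ∧ q ≤ B.card ∧
    ∀ v ∈ A, 2 ^ d * (nb H v B).card ≤ B.card

lemma pick {d q : ℕ} {U X0 : Finset V} (Hs : Fin 4 → SimpleGraph V) (X : Fin 4 → Finset V)
    (hSP : ∀ i, ¬ SP (Hs i) d q U) (hX0 : X0 ⊆ U) (hX : ∀ i, X i ⊆ U)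
    (hdis : ∀ i, Disjoint X0 (X i)) (hq : 1 ≤ q) (h0 : 4 * q ≤ X0.card) (hc : ∀ i, q ≤ (X i).card) :
    ∃ v ∈ X0, ∀ i, (X i).card < 2 ^ d * (nb (Hs i) v (X i)).card := by
  classical
  by_contra hcon
  push Not at hcon
  have hsub : X0 ⊆ (Finset.univ : Finset (Fin 4)).biUnion
      (fun i => X0.filter (fun v => 2 ^ d * (nb (Hs i) v (X i)).card ≤ (X i).card)) := by
    intro v hv
    obtain ⟨i, hi⟩ := hcon v hv
    exact Finset.mem_biUnion.2 ⟨i, Finset.mem_univ _, Finset.mem_filter.2 ⟨hv, hi⟩⟩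
  have h1 := Finset.card_le_card hsub
  have h2 := Finset.card_biUnion_le_card_mul (Finset.univ : Finset (Fin 4))
    (fun i => X0.filter (fun v => 2 ^ d * (nb (Hs i) v (X i)).card ≤ (X i).card)) (q - 1)
    (by
      intro i _
      by_contra hlt
      apply hSP i
      refine ⟨X0.filter (fun v => 2 ^ d * (nb (Hs i) v (X i)).card ≤ (X i).card), X i,
        (Finset.filter_subset _ _).trans hX0, hX i,
        Finset.disjoint_of_subset_left (Finset.filter_subset _ _) (hdis i), by omega, hc i, ?_⟩
      intro v hv
      exact (Finset.mem_filter.1 hv).2)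
  simp only [Finset.card_univ, Fintype.card_fin] at h2
  omega

lemma shrink {d Y : ℕ} {H : SimpleGraph V} {v : V} {X : Finset V} (hX : 2 ^ d * Y ≤ X.card)
    (h : X.card < 2 ^ d * (nb H v X).card) : Y ≤ (nb H v X).card :=
  (Nat.lt_of_mul_lt_mul_left (lt_of_le_of_lt hX h)).le

lemma pair (h5 : NoC5 G) (d q : ℕ) (hq : 1 ≤ q) (U : Finset V)
    (hU : 5 * (2 ^ d * (2 ^ d * (2 ^ d * (2 ^ d * (4 * q))))) ≤ U.card) :
    SP G d q U ∨ SP Gᶜ d q U := by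
  classical
  by_contra hcon
  push Not at hcon
  obtain ⟨hG, hGc⟩ := hcon
  set T4 := 4 * q with hT4
  set T3 := 2 ^ d * T4 with hT3
  set T2 := 2 ^ d * T3 with hT2
  set T1 := 2 ^ d * T2 with hT1
  set T0 := 2 ^ d * T1 with hT0
  have hp : 0 < 2 ^ d := by positivity
  have l4 : q ≤ T4 := by omega
  have l3 : T4 ≤ T3 := Nat.le_mul_of_pos_left _ hp
  have l2 : T3 ≤ T2 := Nat.le_mul_of_pos_left _ hp
  have l1 : T2 ≤ T1 := Nat.le_mul_of_pos_left _ hp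
  have l0 : T1 ≤ T0 := Nat.le_mul_of_pos_left _ hp
  clear_value T0 T1 T2 T3 T4
  obtain ⟨X0, s0, c0⟩ := Finset.exists_subset_card_eq (s := U) (n := T0) (by omega)
  have k0 := Finset.card_sdiff_of_subset s0
  obtain ⟨X1, s1, c1⟩ := Finset.exists_subset_card_eq (s := U \ X0) (n := T0) (by omega)
  have k1 := Finset.card_sdiff_of_subset s1
  obtain ⟨X2, s2, c2⟩ := Finset.exists_subset_card_eq (s := (U \ X0) \ X1) (n := T0) (by omega)
  have k2 := Finset.card_sdiff_of_subset s2
  obtain ⟨X3, s3, c3⟩ := Finset.exists_subset_card_eq (s := ((U \ X0) \ X1) \ X2) (n := T0) (by omega)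
  have k3 := Finset.card_sdiff_of_subset s3
  obtain ⟨X4, s4, c4⟩ := Finset.exists_subset_card_eq (s := (((U \ X0) \ X1) \ X2) \ X3) (n := T0) (by omega)
  have m1 : ∀ w ∈ X1, w ∈ U ∧ w ∉ X0 := fun w hw => by simpa using s1 hw
  have m2 : ∀ w ∈ X2, (w ∈ U ∧ w ∉ X0) ∧ w ∉ X1 := fun w hw => by
    simpa only [Finset.mem_sdiff] using s2 hw
  have m3 : ∀ w ∈ X3, ((w ∈ U ∧ w ∉ X0) ∧ w ∉ X1) ∧ w ∉ X2 := fun w hw => by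
    simpa only [Finset.mem_sdiff] using s3 hw
  have m4 : ∀ w ∈ X4, (((w ∈ U ∧ w ∉ X0) ∧ w ∉ X1) ∧ w ∉ X2) ∧ w ∉ X3 := fun w hw => by
    simpa only [Finset.mem_sdiff] using s4 hw
  clear s1 s2 s3 s4 k0 k1 k2 k3
  have u1 : X1 ⊆ U := fun w hw => (m1 w hw).1
  have u2 : X2 ⊆ U := fun w hw => (m2 w hw).1.1
  have u3 : X3 ⊆ U := fun w hw => (m3 w hw).1.1.1
  have u4 : X4 ⊆ U := fun w hw => (m4 w hw).1.1.1.1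
  have dj : ∀ {X Y : Finset V}, (∀ w ∈ Y, w ∉ X) → Disjoint X Y := by
    intro X Y h
    rw [Finset.disjoint_right]
    exact fun w hw => h w hw
  have nt : ∀ {H : SimpleGraph V} {v : V} {X Y : Finset V}, X ⊆ Y → nb H v X ⊆ Y :=
    fun h => (nb_subset _ _).trans h
  obtain ⟨a, ha, hav⟩ := pick (d := d) (q := q) (U := U) (X0 := X0) ![G, Gᶜ, Gᶜ, G] ![X1, X2, X3, X4]
    (by intro i; fin_cases i <;> assumption) s0 (by intro i; fin_cases i <;> assumption)
    (by
      intro i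
      fin_cases i
      · exact dj (fun w hw => (m1 w hw).2)
      · exact dj (fun w hw => (m2 w hw).1.2)
      · exact dj (fun w hw => (m3 w hw).1.1.2)
      · exact dj (fun w hw => (m4 w hw).1.1.1.2)) hq (by omega)
    (by intro i; fin_cases i <;> simp <;> omega)
  have a1 : X1.card < 2 ^ d * (nb G a X1).card := hav 0
  have a2 : X2.card < 2 ^ d * (nb Gᶜ a X2).card := hav 1
  have a3 : X3.card < 2 ^ d * (nb Gᶜ a X3).card := hav 2
  have a4 : X4.card < 2 ^ d * (nb G a X4).card := hav 3
  replace a1 := shrink (Y := T1) (by omega) a1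
  replace a2 := shrink (Y := T1) (by omega) a2
  replace a3 := shrink (Y := T1) (by omega) a3
  replace a4 := shrink (Y := T1) (by omega) a4
  set Y1 := nb G a X1 with hY1
  set Y2 := nb Gᶜ a X2 with hY2
  set Y3 := nb Gᶜ a X3 with hY3
  set Y4 := nb G a X4 with hY4
  have p1 : Y1 ⊆ X1 := nb_subset _ _
  have p2 : Y2 ⊆ X2 := nb_subset _ _
  have p3 : Y3 ⊆ X3 := nb_subset _ _
  have p4 : Y4 ⊆ X4 := nb_subset _ _
  obtain ⟨b, hb, hbv⟩ := pick (d := d) (q := q) (U := U) (X0 := Y1) ![G, Gᶜ, Gᶜ, Gᶜ] ![Y2, Y3, Y4, Y4]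
    (by intro i; fin_cases i <;> assumption) (p1.trans u1)
    (by
      intro i
      fin_cases i
      · exact p2.trans u2
      · exact p3.trans u3
      · exact p4.trans u4
      · exact p4.trans u4)
    (by
      intro i
      fin_cases i
      · exact dj (fun w hw h => (m2 w (p2 hw)).2 (p1 h))
      · exact dj (fun w hw h => (m3 w (p3 hw)).1.2 (p1 h))
      · exact dj (fun w hw h => (m4 w (p4 hw)).1.1.2 (p1 h))
      · exact dj (fun w hw h => (m4 w (p4 hw)).1.1.2 (p1 h))) hq (by omega)
    (by intro i; fin_cases i <;> simp <;> omega)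
  have b2 : Y2.card < 2 ^ d * (nb G b Y2).card := hbv 0
  have b3 : Y3.card < 2 ^ d * (nb Gᶜ b Y3).card := hbv 1
  have b4 : Y4.card < 2 ^ d * (nb Gᶜ b Y4).card := hbv 2
  replace b2 := shrink (Y := T2) (by omega) b2
  replace b3 := shrink (Y := T2) (by omega) b3
  replace b4 := shrink (Y := T2) (by omega) b4
  set Z2 := nb G b Y2 with hZ2
  set Z3 := nb Gᶜ b Y3 with hZ3
  set Z4 := nb Gᶜ b Y4 with hZ4
  have q2 : Z2 ⊆ Y2 := nb_subset _ _
  have q3 : Z3 ⊆ Y3 := nb_subset _ _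
  have q4 : Z4 ⊆ Y4 := nb_subset _ _
  obtain ⟨c, hc, hcv⟩ := pick (d := d) (q := q) (U := U) (X0 := Z2) ![G, Gᶜ, Gᶜ, Gᶜ] ![Z3, Z4, Z4, Z4]
    (by intro i; fin_cases i <;> assumption) (q2.trans (p2.trans u2))
    (by
      intro i
      fin_cases i
      · exact q3.trans (p3.trans u3)
      all_goals exact q4.trans (p4.trans u4))
    (by
      intro i
      fin_cases i
      · exact dj (fun w hw h => (m3 w (p3 (q3 hw))).2 (p2 (q2 h)))
      all_goals exact dj (fun w hw h => (m4 w (p4 (q4 hw))).1.2 (p2 (q2 h)))) hq (by omega)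
    (by intro i; fin_cases i <;> simp <;> omega)
  have c3 : Z3.card < 2 ^ d * (nb G c Z3).card := hcv 0
  have c4 : Z4.card < 2 ^ d * (nb Gᶜ c Z4).card := hcv 1
  replace c3 := shrink (Y := T3) (by omega) c3
  replace c4 := shrink (Y := T3) (by omega) c4
  set W3 := nb G c Z3 with hW3
  set W4 := nb Gᶜ c Z4 with hW4
  have r3 : W3 ⊆ Z3 := nb_subset _ _
  have r4 : W4 ⊆ Z4 := nb_subset _ _
  obtain ⟨e, he, hev⟩ := pick (d := d) (q := q) (U := U) (X0 := W3) ![G, G, G, G] ![W4, W4, W4, W4]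
    (by intro i; fin_cases i <;> assumption) (r3.trans (q3.trans (p3.trans u3)))
    (by
      intro i
      fin_cases i
      all_goals exact r4.trans (q4.trans (p4.trans u4)))
    (by
      intro i
      fin_cases i
      all_goals exact dj (fun w hw h => (m4 w (p4 (q4 (r4 hw)))).2 (p3 (q3 (r3 h))))) hq (by omega)
    (by intro i; fin_cases i <;> simp <;> omega)
  have e4 : W4.card < 2 ^ d * (nb G e W4).card := hev 0
  replace e4 := shrink (Y := T4) (by omega) e4
  obtain ⟨f, hf⟩ := Finset.card_pos.1 (show 0 < (nb G e W4).card by omega)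
  rw [mem_nb] at hf
  have f1 := mem_nb.1 hf.1
  have f2 := mem_nb.1 f1.1
  have f3 := mem_nb.1 f2.1
  have e1 := mem_nb.1 he
  have e2 := mem_nb.1 e1.1
  have e3 := mem_nb.1 e2.1
  have c1 := mem_nb.1 hc
  have c2 := mem_nb.1 c1.1
  have b1 := mem_nb.1 hb
  simp only [SimpleGraph.compl_adj] at f1 f2 f3 e1 e2 e3 c1 c2 b1
  exact h5 a b c e f b1.2 c1.2 e1.2 hf.2 f3.2.symm c2.2.2 e3.2.2 e2.2.2 f2.2.2 f1.2.2

/-- Twice the number of edges inside `W`. -/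
noncomputable def ee (H : SimpleGraph V) (W : Finset V) : ℕ := ∑ v ∈ W, (nb H v W).card

lemma nb_card_union (H : SimpleGraph V) (v : V) {A B C : Finset V} (h : ∀ w, w ∈ C → w ∈ A ∨ w ∈ B) :
    (nb H v C).card ≤ (nb H v A).card + (nb H v B).card := by
  classical
  refine le_trans (Finset.card_le_card ?_) (Finset.card_union_le _ _)
  intro w hw
  rw [mem_nb] at hw
  rw [Finset.mem_union, mem_nb, mem_nb]
  rcases h w hw.1 with h | h
  · exact Or.inl ⟨h, hw.2⟩
  · exact Or.inr ⟨h, hw.2⟩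

lemma ee_self (H : SimpleGraph V) (W : Finset V) : ee H W ≤ W.card * W.card := by
  unfold ee
  simpa using Finset.sum_le_card_nsmul W (fun v => (nb H v W).card) W.card
    (fun v _ => Finset.card_le_card (nb_subset _ _))

/-- One merging step. -/
lemma merge (H : SimpleGraph V) (d P q : ℕ) (s n0 : ℕ) (U : Finset V) (hn0 : 1 ≤ n0)
    (hSP : SP H d (2 * n0) U) (hP : P = 2 ^ s * q) (Other : Prop)
    (ih : ∀ X ⊆ U, n0 ≤ X.card → (∃ W ⊆ X, W.card = P ∧ 2 ^ d * ee H W ≤ (2 ^ d + 2 ^ (s + 1)) * 2 ^ s * q ^ 2) ∨ Other) :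
    (∃ W ⊆ U, W.card = 2 ^ (s + 1) * q ∧
      2 ^ d * ee H W ≤ (2 ^ d + 2 ^ (s + 1 + 1)) * 2 ^ (s + 1) * q ^ 2) ∨ Other := by
  classical
  obtain ⟨A, B, hAU, hBU, hdis, hA, hB, hAB⟩ := hSP
  rcases ih A hAU (by omega) with ⟨A', hA'A, hA'c, hA'e⟩ | h
  swap
  · exact Or.inr h
  -- good vertices of B
  set B' := B.filter (fun b => 2 ^ d * (nb H b A').card ≤ 2 * A'.card) with hB'
  have hB'c : n0 ≤ B'.card := by
    by_contra hlt
    have hsplit := Finset.card_filter_add_card_filter_not (s := B) (fun b => 2 ^ d * (nb H b A').card ≤ 2 * A'.card)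
    rw [← hB'] at hsplit
    set B'' := B.filter (fun b => ¬ 2 ^ d * (nb H b A').card ≤ 2 * A'.card) with hB''
    have h1 : B''.card * (2 * A'.card + 1) ≤ ∑ b ∈ B'', 2 ^ d * (nb H b A').card := by
      simpa using Finset.card_nsmul_le_sum B'' (fun b => 2 ^ d * (nb H b A').card) (2 * A'.card + 1)
        (fun b hb => by
          have := (Finset.mem_filter.1 hb).2
          omega)
    have h2 : ∑ b ∈ B'', 2 ^ d * (nb H b A').card ≤ ∑ b ∈ B, 2 ^ d * (nb H b A').card :=
      Finset.sum_le_sum_of_subset (Finset.filter_subset _ _)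
    rw [← Finset.mul_sum (s := B), ← sum_nb_comm, Finset.mul_sum] at h2
    have h3 : ∑ a ∈ A', 2 ^ d * (nb H a B).card ≤ A'.card * B.card := by
      simpa using Finset.sum_le_card_nsmul A' (fun a => 2 ^ d * (nb H a B).card) B.card
        (fun a ha => hAB a (hA'A ha))
    have h4 : B.card + 1 ≤ 2 * B''.card := by omega
    have h6 : 1 ≤ B''.card := by omega
    have h7 := Nat.mul_le_mul_left A'.card h4
    nlinarith
  rcases ih B' ((Finset.filter_subset _ _).trans hBU) hB'c with ⟨D, hDB, hDc, hDe⟩ | h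
  swap
  · exact Or.inr h
  left
  have hdis' : Disjoint A' D :=
    Finset.disjoint_of_subset_left hA'A (Finset.disjoint_of_subset_right
      (hDB.trans (Finset.filter_subset _ _)) hdis)
  have hcross : 2 ^ d * ∑ b ∈ D, (nb H b A').card ≤ P * (2 * P) := by
    rw [Finset.mul_sum]
    have := Finset.sum_le_card_nsmul D (fun b => 2 ^ d * (nb H b A').card) (2 * A'.card)
        (fun b hb => (Finset.mem_filter.1 (hDB hb)).2)
    rw [hDc, hA'c] at this
    simpa using this
  have hun : ∀ w, w ∈ A' ∪ D → w ∈ A' ∨ w ∈ D := fun w hw => Finset.mem_union.1 hw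
  have hee : ee H (A' ∪ D) ≤ ee H A' + ee H D + 2 * ∑ b ∈ D, (nb H b A').card := by
    have h1 : ee H (A' ∪ D) ≤ ∑ v ∈ A', ((nb H v A').card + (nb H v D).card) +
        ∑ v ∈ D, ((nb H v A').card + (nb H v D).card) := by
      unfold ee
      rw [Finset.sum_union hdis']
      exact Nat.add_le_add (Finset.sum_le_sum fun v _ => nb_card_union H v hun)
        (Finset.sum_le_sum fun v _ => nb_card_union H v hun)
    rw [Finset.sum_add_distrib, Finset.sum_add_distrib, sum_nb_comm A' D] at h1
    unfold ee at h1 ⊢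
    omega
  refine ⟨A' ∪ D, Finset.union_subset (hA'A.trans hAU)
    ((hDB.trans (Finset.filter_subset _ _)).trans hBU), ?_, ?_⟩
  · rw [Finset.card_union_of_disjoint hdis', hA'c, hDc, hP, pow_succ]; ring
  · have h1 := Nat.mul_le_mul_left (2 ^ d) hee
    have h2 : (2 ^ d + 2 ^ (s + 1 + 1)) * 2 ^ (s + 1) * q ^ 2 =
        2 * ((2 ^ d + 2 ^ (s + 1)) * 2 ^ s * q ^ 2) + 2 * (P * (2 * P)) := by
      rw [hP]; ring
    rw [h2]
    linarith

/-- Sparse or dense sets, average version. -/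
lemma fox_sudakov (h5 : NoC5 G) (d q : ℕ) (hq : 1 ≤ q) : ∀ N s r : ℕ, s + r = N → ∀ U : Finset V,
    (2 ^ (4 * d + 6)) ^ N * q ≤ U.card →
    (∃ W ⊆ U, W.card = 2 ^ s * q ∧ 2 ^ d * ee G W ≤ (2 ^ d + 2 ^ (s + 1)) * 2 ^ s * q ^ 2) ∨
    (∃ W ⊆ U, W.card = 2 ^ r * q ∧ 2 ^ d * ee Gᶜ W ≤ (2 ^ d + 2 ^ (r + 1)) * 2 ^ r * q ^ 2) := by
  classical
  have base : ∀ (H : SimpleGraph V) (U : Finset V), q ≤ U.card →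
      ∃ W ⊆ U, W.card = 2 ^ 0 * q ∧ 2 ^ d * ee H W ≤ (2 ^ d + 2 ^ (0 + 1)) * 2 ^ 0 * q ^ 2 := by
    intro H U hU
    obtain ⟨W, hW, hc⟩ := Finset.exists_subset_card_eq hU
    refine ⟨W, hW, by simpa using hc, ?_⟩
    have := Nat.mul_le_mul_left (2 ^ d) (ee_self H W)
    rw [hc] at this
    have e : (2 ^ d + 2 ^ (0 + 1)) * 2 ^ 0 * q ^ 2 = 2 ^ d * (q * q) + 2 * q ^ 2 := by ring
    omega
  intro N
  induction N with
  | zero =>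
    intro s r h U hU
    obtain rfl : s = 0 := by omega
    exact Or.inl (base G U (by simpa using hU))
  | succ N ih =>
    intro s r h U hU
    have hpw : 1 ≤ (2 ^ (4 * d + 6)) ^ (N + 1) := Nat.one_le_pow _ _ (by positivity)
    have hqU : q ≤ U.card := (Nat.le_mul_of_pos_left _ hpw).trans hU
    rcases Nat.eq_zero_or_pos s with rfl | hs
    · exact Or.inl (base G U hqU)
    rcases Nat.eq_zero_or_pos r with rfl | hr
    · exact Or.inr (base Gᶜ U hqU)
    obtain ⟨s, rfl⟩ : ∃ s', s = s' + 1 := ⟨s - 1, by omega⟩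
    obtain ⟨r, rfl⟩ : ∃ s', r = s' + 1 := ⟨r - 1, by omega⟩
    set n0 := (2 ^ (4 * d + 6)) ^ N * q with hn0
    have hn01 : 1 ≤ n0 := Nat.mul_pos (by positivity) hq
    have hUn : 2 ^ (4 * d + 6) * n0 ≤ U.card := by
      refine le_trans (le_of_eq ?_) hU
      rw [hn0, pow_succ]; ring
    rcases pair h5 d (2 * n0) (by omega) U (by
      refine le_trans ?_ hUn
      have e : 2 ^ (4 * d + 6) = 2 ^ d * (2 ^ d * (2 ^ d * (2 ^ d * 64))) := by
        rw [pow_add, show 4 * d = d + (d + (d + d)) by ring, pow_add, pow_add, pow_add]; ring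
      rw [e]
      have : 0 ≤ 2 ^ d * (2 ^ d * (2 ^ d * (2 ^ d * n0))) := Nat.zero_le _
      nlinarith) with hSP | hSP
    · exact merge G d _ q s n0 U hn01 hSP rfl _ (fun X hX hXc => by
        rcases ih s (r + 1) (by omega) X hXc with hh | ⟨W, hW, hW2⟩
        · exact Or.inl hh
        · exact Or.inr ⟨W, hW.trans hX, hW2⟩)
    · refine Or.symm (merge Gᶜ d _ q r n0 U hn01 hSP rfl _ (fun X hX hXc => ?_))
      rcases ih (s + 1) r (by omega) X hXc with ⟨W, hW, hW2⟩ | hh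
      · exact Or.inr ⟨W, hW.trans hX, hW2⟩
      · exact Or.inl hh

lemma prune (H : SimpleGraph V) (d q : ℕ) (hq : 1 ≤ q) (U W : Finset V) (hWU : W ⊆ U)
    (hc : W.card = 2 ^ d * q) (he : 2 ^ d * ee H W ≤ (2 ^ d + 2 ^ (d + 1)) * 2 ^ d * q ^ 2) :
    ∃ W' ⊆ U, 2 ^ d * q ≤ 2 * W'.card ∧ ∀ v ∈ W', (nb H v W').card ≤ 6 * q := by
  classical
  have he' : ee H W ≤ 3 * 2 ^ d * q ^ 2 := by
    have h1 : 2 ^ d * ee H W ≤ 2 ^ d * (3 * 2 ^ d * q ^ 2) := by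
      refine he.trans (le_of_eq ?_)
      rw [pow_succ]; ring
    exact Nat.le_of_mul_le_mul_left h1 (by positivity)
  refine ⟨W.filter (fun v => (nb H v W).card ≤ 6 * q), (Finset.filter_subset _ _).trans hWU, ?_, ?_⟩
  · have hsplit := Finset.card_filter_add_card_filter_not (s := W) (fun v => (nb H v W).card ≤ 6 * q)
    set B := W.filter (fun v => ¬ (nb H v W).card ≤ 6 * q) with hB
    have h1 : B.card * (6 * q) ≤ ∑ v ∈ B, (nb H v W).card := by
      simpa using Finset.card_nsmul_le_sum B (fun v => (nb H v W).card) (6 * q)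
        (fun v hv => by
          have := (Finset.mem_filter.1 hv).2
          omega)
    have h2 : ∑ v ∈ B, (nb H v W).card ≤ ee H W :=
      Finset.sum_le_sum_of_subset (Finset.filter_subset _ _)
    have h3 : (2 * B.card) * (3 * q) ≤ (2 ^ d * q) * (3 * q) := by nlinarith
    have h4 := Nat.le_of_mul_le_mul_right h3 (by omega)
    omega
  · intro v hv
    refine le_trans (Finset.card_le_card ?_) (Finset.mem_filter.1 hv).2
    intro w hw
    rw [mem_nb] at hw ⊢
    exact ⟨(Finset.mem_filter.1 hw.1).1, hw.2⟩

lemma step_one {H : SimpleGraph V} (h5 : NoC5 H) (k m x : ℕ) (hm : 1 ≤ m)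
    (hal : ∀ U : Finset V, al H U ≤ 2 ^ (k ^ 2))
    (hQ : ∀ U : Finset V, m ≤ U.card → x ≤ gg H U) (W U : Finset V) (hWU : W ⊆ U)
    (hW : 2 ^ (6 * k + 6) * ((2 ^ (k ^ 2)) ^ 2 * m) ≤ 2 * W.card)
    (hdeg : ∀ v ∈ W, (nb H v W).card ≤ 6 * ((2 ^ (k ^ 2)) ^ 2 * m)) : k * x ≤ gg H U := by
  have hM : 1 ≤ 2 ^ (k ^ 2) := Nat.one_le_two_pow
  set q := (2 ^ (k ^ 2)) ^ 2 * m with hq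
  have hq1 : 1 ≤ q := Nat.mul_pos (by positivity) hm
  have e1 : 2 ^ (6 * k + 6) = 4 ^ k * 16 ^ k * 64 := by
    rw [pow_add, pow_mul, ← mul_pow]; norm_num
  rw [e1] at hW
  refine le_trans (iterate h5 (2 ^ (k ^ 2)) m x k (6 * q) hM hm (by omega) hal hQ k le_rfl W hdeg ?_ ?_)
    (gg_mono hWU)
  · have : 0 ≤ 4 ^ k * 16 ^ k * q := Nat.zero_le _
    nlinarith
  · have h16 : 1 ≤ 16 ^ k := Nat.one_le_pow _ _ (by norm_num)
    have h2 : 4 ^ k * 1 * q ≤ 4 ^ k * 16 ^ k * q :=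
      Nat.mul_le_mul_right _ (Nat.mul_le_mul_left _ h16)
    have h3 : 4 ^ k * (16 * (2 ^ (k ^ 2)) ^ 2 * m) = 16 * (4 ^ k * 1 * q) := by rw [hq]; ring
    rw [h3]
    nlinarith

lemma step (h5 : NoC5 G) (k m x : ℕ) (hk : 1 ≤ k) (hm : 1 ≤ m)
    (hal : ∀ U : Finset V, al G U ≤ 2 ^ (k ^ 2)) (hal' : ∀ U : Finset V, al Gᶜ U ≤ 2 ^ (k ^ 2))
    (hQ : ∀ U : Finset V, m ≤ U.card → x ≤ gg G U) (U : Finset V)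
    (hU : 2 ^ (1300 * k ^ 2) * m ≤ U.card) : k * x ≤ gg G U := by
  have hq1 : 1 ≤ (2 ^ (k ^ 2)) ^ 2 * m := Nat.mul_pos (by positivity) hm
  have hU' : (2 ^ (4 * (6 * k + 6) + 6)) ^ ((6 * k + 6) + (6 * k + 6)) * ((2 ^ (k ^ 2)) ^ 2 * m) ≤ U.card := by
    refine le_trans ?_ hU
    rw [← mul_assoc, ← pow_mul, ← pow_mul, ← pow_add]
    apply Nat.mul_le_mul_right
    apply Nat.pow_le_pow_right (by norm_num)
    nlinarith
  rcases fox_sudakov h5 (6 * k + 6) _ hq1 _ (6 * k + 6) (6 * k + 6) rfl U hU' with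
    ⟨W, hW, hc, he⟩ | ⟨W, hW, hc, he⟩
  · obtain ⟨W', h1, h2, h3⟩ := prune G _ _ hq1 U W hW hc he
    exact step_one h5 k m x hm hal hQ W' U h1 h2 h3
  · obtain ⟨W', h1, h2, h3⟩ := prune Gᶜ _ _ hq1 U W hW hc he
    rw [← gg_compl]
    exact step_one h5.compl k m x hm hal' (fun U hU => by rw [gg_compl]; exact hQ U hU) W' U h1 h2 h3

lemma steps (h5 : NoC5 G) (k : ℕ) (hk : 1 ≤ k)
    (hal : ∀ U : Finset V, al G U ≤ 2 ^ (k ^ 2)) (hal' : ∀ U : Finset V, al Gᶜ U ≤ 2 ^ (k ^ 2)) (t : ℕ) :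
    ∀ U : Finset V, 2 ^ (1300 * k ^ 2 * t) ≤ U.card → k ^ t ≤ gg G U := by
  induction t with
  | zero =>
    intro U hU
    simpa using one_le_gg (G := G) (A := U) (by simpa using hU)
  | succ t ih =>
    intro U hU
    rw [pow_succ, mul_comm]
    refine step h5 k (2 ^ (1300 * k ^ 2 * t)) (k ^ t) hk Nat.one_le_two_pow hal hal' ih U ?_
    rw [← pow_add]
    refine le_trans (le_of_eq ?_) hU
    ring

end

lemma al_le_cliqueNum {n : ℕ} (G : SimpleGraph (Fin n)) (U : Finset (Fin n)) :
    al G U ≤ Gᶜ.cliqueNum := by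
  obtain ⟨S, _, h1, h2⟩ := exists_al G U
  rw [← h2]
  apply SimpleGraph.IsClique.card_le_cliqueNum
  intro a ha b hb hab
  rw [SimpleGraph.compl_adj]
  exact ⟨hab, h1 a ha b hb⟩

/-- Combinatorial core of the theorem. -/
lemma core {n : ℕ} (G : SimpleGraph (Fin n)) (h5 : C5Free G) (k t : ℕ) (hk : 1 ≤ k)
    (hn : 2 ^ (1300 * k ^ 2 * t) ≤ n) (hkt : 2 ^ (2 * k ^ 2) < k ^ t) :
    2 ^ (k ^ 2) ≤ max (Gᶜ.cliqueNum) (G.cliqueNum) := by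
  by_contra hcon
  push Not at hcon
  have hal : ∀ U, al G U ≤ 2 ^ (k ^ 2) := fun U =>
    (al_le_cliqueNum G U).trans ((le_max_left _ _).trans hcon.le)
  have hal' : ∀ U, al Gᶜ U ≤ 2 ^ (k ^ 2) := fun U => by
    have := al_le_cliqueNum Gᶜ U
    rw [compl_compl] at this
    exact this.trans ((le_max_right _ _).trans hcon.le)
  have h1 := steps (noC5_of_C5Free h5) k hk hal hal' t Finset.univ (by simpa using hn)
  have h2 : gg G Finset.univ ≤ 2 ^ (k ^ 2) * 2 ^ (k ^ 2) := Nat.mul_le_mul (hal _) (hal' _)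
  rw [← pow_add, ← two_mul] at h2
  omega

lemma two_le {n : ℕ} (G : SimpleGraph (Fin n)) (hn : 1 < n) :
    2 ≤ max (Gᶜ.cliqueNum) (G.cliqueNum) := by
  have key : ∀ H : SimpleGraph (Fin n), H.Adj ⟨0, by omega⟩ ⟨1, hn⟩ → 2 ≤ H.cliqueNum := by
    intro H h
    have hcl : H.IsClique (({⟨0, by omega⟩, ⟨1, hn⟩} : Finset (Fin n)) : Set (Fin n)) := by
      simp [h]
    have := SimpleGraph.IsClique.card_le_cliqueNum (tc := hcl)
    simpa using this
  by_cases h : G.Adj ⟨0, by omega⟩ ⟨1, hn⟩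
  · exact le_max_of_le_right (key G h)
  · refine le_max_of_le_left (key Gᶜ ?_)
    rw [SimpleGraph.compl_adj]
    exact ⟨by simp, h⟩

end C5Proof

set_option maxHeartbeats 1600000 in
/-- There exists `c > 0` such that every `C₅`-free graph `G` on `n > 1` vertices
satisfies `max (α G) (ω G) ≥ 2 ^ (c√(log n · log log n))` (logs base 2). -/
theorem exists_const_c5_free_max_indep_clique :
    ∃ c : ℝ, 0 < c ∧
      ∀ (n : ℕ) (G : SimpleGraph (Fin n)), 1 < n → C5Free G →
        (2 : ℝ) ^ (c * Real.sqrt (Real.logb 2 n * Real.logb 2 (Real.logb 2 n))) ≤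
          (max (Gᶜ.cliqueNum) (G.cliqueNum) : ℝ) := by
  refine ⟨1 / 2 ^ 30, by positivity, ?_⟩
  intro n G hn h5
  rw [← Nat.cast_max]
  have hn0 : (0 : ℝ) < n := by exact_mod_cast (by omega : 0 < n)
  have hn2 : (2 : ℝ) ≤ n := by exact_mod_cast hn
  set L := Real.logb 2 n with hL
  set l := Real.logb 2 L with hl
  have hL1 : 1 ≤ L := by
    rw [hL, Real.le_logb_iff_rpow_le (by norm_num) hn0]
    simpa using hn2
  have hLn : (2 : ℝ) ^ L = n := Real.rpow_logb (by norm_num) (by norm_num) hn0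
  have hlL : (2 : ℝ) ^ l = L := Real.rpow_logb (by norm_num) (by norm_num) (by linarith)
  have hl0 : 0 ≤ l := Real.logb_nonneg (by norm_num) hL1
  set X := Real.sqrt (L * l) with hX
  have hX0 : 0 ≤ X := Real.sqrt_nonneg _
  have hXX : X ^ 2 = L * l := Real.sq_sqrt (by positivity)
  rcases lt_or_ge l 52 with hlt | hge
  · have h2 : (2 : ℝ) ≤ ((max (Gᶜ.cliqueNum) (G.cliqueNum) : ℕ) : ℝ) := by
      exact_mod_cast C5Proof.two_le G hn
    refine le_trans ?_ h2
    have hLs : L ≤ 2 ^ 52 := by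
      rw [← hlL, ← Real.rpow_natCast]
      exact Real.rpow_le_rpow_of_exponent_le (by norm_num) (by push_cast; exact hlt.le)
    have hXs : X ≤ 2 ^ 29 := by
      have : X ^ 2 ≤ (2 ^ 29) ^ 2 := by
        rw [hXX]
        calc L * l ≤ 2 ^ 52 * 52 := mul_le_mul hLs hlt.le hl0 (by norm_num)
          _ ≤ (2 ^ 29) ^ 2 := by norm_num
      exact le_of_sq_le_sq this (by norm_num)
    calc (2 : ℝ) ^ (1 / 2 ^ 30 * X) ≤ 2 ^ (1 : ℝ) :=
          Real.rpow_le_rpow_of_exponent_le (by norm_num) (by linarith)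
      _ = 2 := Real.rpow_one 2
  · have hlleL : l ≤ L := by
      have h1 := Real.logb_le_logb_of_le (b := 2) (by norm_num) (by linarith) hn2
      have h2 : l < (2 : ℝ) ^ l := by
        have h3 : Real.exp (Real.log 2 * l) = (2 : ℝ) ^ l := by
          rw [Real.rpow_def_of_pos (by norm_num)]
        have h4 := Real.quadratic_le_exp_of_nonneg (x := Real.log 2 * l)
          (mul_nonneg (Real.log_nonneg (by norm_num)) hl0)
        have h6 : (1 : ℝ) / 2 < Real.log 2 := by linarith [Real.log_two_gt_d9]
        have h7 : l / 2 ≤ Real.log 2 * l := by nlinarith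
        rw [← h3]
        nlinarith
      linarith
    have hXL : X ≤ L := by
      apply le_of_sq_le_sq _ (by linarith)
      rw [hXX]; nlinarith
    -- lower bound on X
    have hXlow : (2 : ℝ) ^ (l / 4) * 8192 ≤ X := by
      have h1 : (2 : ℝ) ^ (l / 2) ≤ X := by
        apply le_of_sq_le_sq _ hX0
        rw [hXX, ← Real.rpow_natCast, ← Real.rpow_mul (by norm_num)]
        push_cast
        rw [show l / 2 * 2 = l by ring, hlL]
        nlinarith
      refine le_trans ?_ h1
      have h2 : (8192 : ℝ) = 2 ^ (13 : ℝ) := by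
        rw [show (13 : ℝ) = ((13 : ℕ) : ℝ) by norm_num, Real.rpow_natCast]; norm_num
      rw [h2, ← Real.rpow_add (by norm_num)]
      exact Real.rpow_le_rpow_of_exponent_le (by norm_num) (by linarith)
    have hp1 : (1 : ℝ) ≤ (2 : ℝ) ^ (l / 4) := Real.one_le_rpow (by norm_num) (by linarith)
    set s := Real.sqrt (X / 2048) with hs
    have hs0 : 0 ≤ s := Real.sqrt_nonneg _
    have hss : s ^ 2 = X / 2048 := Real.sq_sqrt (by positivity)
    have hs1 : 1 ≤ s := by
      apply le_of_sq_le_sq _ hs0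
      rw [hss]; linarith
    set k := ⌊s⌋₊ with hk
    have hk1 : 1 ≤ k := Nat.le_floor (by simpa using hs1)
    have hk1' : (1 : ℝ) ≤ k := by exact_mod_cast hk1
    have hks : (k : ℝ) ≤ s := Nat.floor_le hs0
    have hsk : s < k + 1 := Nat.lt_floor_add_one s
    have hkup : (k : ℝ) ^ 2 ≤ X / 2048 := by rw [← hss]; nlinarith
    have hklow : X / 8192 ≤ (k : ℝ) ^ 2 := by
      have : s ^ 2 ≤ 4 * (k : ℝ) ^ 2 := by nlinarith
      rw [hss] at this; linarith
    have hkpow : (2 : ℝ) ^ (l / 8) ≤ k := by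
      apply le_of_sq_le_sq _ (by linarith)
      rw [← Real.rpow_natCast ((2 : ℝ) ^ (l / 8)), ← Real.rpow_mul (by norm_num)]
      push_cast
      rw [show l / 8 * 2 = l / 4 by ring]
      linarith
    have hk2 : (1 : ℝ) ≤ (k : ℝ) ^ 2 := by nlinarith
    set y := L / (1300 * (k : ℝ) ^ 2) with hy
    have hyL : y * (1300 * (k : ℝ) ^ 2) = L := div_mul_cancel₀ _ (by positivity)
    have hy1 : 1 ≤ y := by
      rw [hy, le_div_iff₀ (by positivity)]
      linarith
    set t := ⌊y⌋₊ with ht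
    have ht1 : (1 : ℝ) ≤ t := by exact_mod_cast (Nat.le_floor (by simpa using hy1) : 1 ≤ t)
    have hty : (t : ℝ) ≤ y := Nat.floor_le (by linarith)
    have hyt : y < t + 1 := Nat.lt_floor_add_one y
    have hLt : L ≤ t * (2600 * (k : ℝ) ^ 2) := by
      rw [← hyL]; nlinarith
    have hmain : 16 * (k : ℝ) ^ 2 < l * t := by
      have h1 : L * l ≤ (t * l * 2600) * (k : ℝ) ^ 2 := by
        calc L * l ≤ t * (2600 * (k : ℝ) ^ 2) * l := mul_le_mul_of_nonneg_right hLt hl0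
          _ = _ := by ring
      have h2 : (2048 * (k : ℝ) ^ 2) ^ 2 ≤ L * l := by
        rw [← hXX]
        apply pow_le_pow_left₀ (by positivity)
        linarith
      have h3 : (2048 ^ 2 * (k : ℝ) ^ 2) * (k : ℝ) ^ 2 ≤ (t * l * 2600) * (k : ℝ) ^ 2 := by
        refine le_trans (le_of_eq ?_) (h2.trans h1)
        ring
      have h4 := le_of_mul_le_mul_right h3 (by positivity)
      nlinarith
    have h9 : 1300 * (k : ℝ) ^ 2 * (t : ℝ) ≤ L := by
      calc 1300 * (k : ℝ) ^ 2 * (t : ℝ) = t * (1300 * (k : ℝ) ^ 2) := by ring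
        _ ≤ y * (1300 * (k : ℝ) ^ 2) := mul_le_mul_of_nonneg_right hty (by positivity)
        _ = L := hyL
    have hcore := C5Proof.core G h5 k t hk1
      (by
        have : ((2 ^ (1300 * k ^ 2 * t) : ℕ) : ℝ) ≤ n := by
          rw [← hLn]
          push_cast
          rw [← Real.rpow_natCast]
          apply Real.rpow_le_rpow_of_exponent_le (by norm_num)
          push_cast
          exact h9
        exact_mod_cast this)
      (by
        have : ((2 ^ (2 * k ^ 2) : ℕ) : ℝ) < ((k ^ t : ℕ) : ℝ) := by
          push_cast
          calc (2 : ℝ) ^ (2 * k ^ 2) = (2 : ℝ) ^ (2 * (k : ℝ) ^ 2) := by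
                rw [← Real.rpow_natCast]; push_cast; rfl
            _ < (2 : ℝ) ^ (l / 8 * t) :=
                Real.rpow_lt_rpow_of_exponent_lt (by norm_num) (by linarith)
            _ = ((2 : ℝ) ^ (l / 8)) ^ t := by
                rw [Real.rpow_mul (by norm_num), Real.rpow_natCast]
            _ ≤ (k : ℝ) ^ t := pow_le_pow_left₀ (by positivity) hkpow t
        exact_mod_cast this)
    have hcore' : ((2 ^ (k ^ 2) : ℕ) : ℝ) ≤ ((max (Gᶜ.cliqueNum) (G.cliqueNum) : ℕ) : ℝ) := by
      exact_mod_cast hcore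
    refine le_trans ?_ hcore'
    push_cast
    rw [← Real.rpow_natCast (2 : ℝ) (k ^ 2)]
    apply Real.rpow_le_rpow_of_exponent_le (by norm_num)
    push_cast
    refine le_trans ?_ hklow
    linarith
end

section
/- For every real c with 0 < c ≤ 1/2 and every graph G with n > 0 vertices, if (i) every vertex of G has closed degree at most n/16, and (ii) for every two disjoint subsets A, B ⊆ V(G) with |A| ≥ cn/2 and |B| ≥ n/16 the edge-density between A and B is at least c, then G contains C₅ (i.e., G has an induced subgraph isomorphic to the cycle of length five). -/
open SimpleGraph
open scoped Classical

lemma c5_of_verts {V : Type*} (G : SimpleGraph V) (a b c d e : V)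
    (hab : G.Adj a b) (hbc : G.Adj b c) (hcd : G.Adj c d) (hde : G.Adj d e) (hea : G.Adj e a)
    (hac : ¬ G.Adj a c) (had : ¬ G.Adj a d) (hbd : ¬ G.Adj b d) (hbe : ¬ G.Adj b e)
    (hce : ¬ G.Adj c e) : Nonempty (cycleGraph 5 ↪g G) := by
  have hca : ¬ G.Adj c a := fun h => hac h.symm
  have hda : ¬ G.Adj d a := fun h => had h.symm
  have hdb : ¬ G.Adj d b := fun h => hbd h.symm
  have heb : ¬ G.Adj e b := fun h => hbe h.symm
  have hec : ¬ G.Adj e c := fun h => hce h.symm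
  have hadj : ∀ i j : Fin 5, G.Adj (![a, b, c, d, e] i) (![a, b, c, d, e] j) ↔
      (cycleGraph 5).Adj i j := by
    intro i j
    have h1 : (cycleGraph 5).Adj i j ↔ (i - j = 1 ∨ j - i = 1) := by
      simp [cycleGraph_adj]
    rw [h1]
    fin_cases i <;> fin_cases j <;>
      simp [hab, hbc, hcd, hde, hea, hac, had, hbd, hbe, hce, hab.symm, hbc.symm, hcd.symm,
        hde.symm, hea.symm, hca, hda, hdb, heb, hec] <;> decide
  have nab := hab.ne
  have nbc := hbc.ne
  have ncd := hcd.ne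
  have nde := hde.ne
  have nea := hea.ne
  have nac : a ≠ c := fun h => had (h ▸ hcd)
  have nad : a ≠ d := fun h => hac (h ▸ hcd.symm)
  have nbd : b ≠ d := fun h => hbe (h ▸ hde)
  have nbe : b ≠ e := fun h => hbd (h ▸ hde.symm)
  have nce : c ≠ e := fun h => hac (h ▸ hea.symm)
  refine ⟨⟨⟨![a, b, c, d, e], ?_⟩, ?_⟩⟩
  · intro i j h
    fin_cases i <;> fin_cases j <;> simp_all
  · intro i j
    exact hadj i j

lemma grow_set {α β : Type*} [DecidableEq β] [DecidableEq α] (f : α → Finset β) (D : Finset β) (s t : ℝ)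
    (ht : 0 ≤ t) (A : Finset α) (hf : ∀ a ∈ A, ((f a).card : ℝ) ≤ s) (hs : 0 ≤ s)
    (hA : t ≤ ((D ∩ A.biUnion f).card : ℝ)) :
    ∃ X ⊆ A, t ≤ ((D ∩ X.biUnion f).card : ℝ) ∧ ((D ∩ X.biUnion f).card : ℝ) ≤ t + s := by
  induction A using Finset.induction_on with
  | empty =>
    refine ⟨∅, subset_rfl, hA, ?_⟩
    simp
    linarith
  | insert a A ha ih =>
    by_cases h : t ≤ ((D ∩ A.biUnion f).card : ℝ)
    · obtain ⟨X, hX, h1, h2⟩ := ih (fun b hb => hf b (Finset.mem_insert_of_mem hb)) h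
      exact ⟨X, hX.trans (Finset.subset_insert _ _), h1, h2⟩
    · refine ⟨insert a A, subset_rfl, hA, ?_⟩
      have h3 : D ∩ (insert a A).biUnion f ⊆ (D ∩ A.biUnion f) ∪ f a := by
        intro x
        simp only [Finset.mem_inter, Finset.mem_biUnion, Finset.mem_insert, Finset.mem_union]
        rintro ⟨hx, b, rfl | hb, hb2⟩
        · exact Or.inr hb2
        · exact Or.inl ⟨hx, b, hb, hb2⟩
      have h4 := (Finset.card_le_card h3).trans (Finset.card_union_le _ _)
      have h5 : ((D ∩ (insert a A).biUnion f).card : ℝ) ≤ (D ∩ A.biUnion f).card + (f a).card := by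
        exact_mod_cast h4
      have h6 := hf a (Finset.mem_insert_self _ _)
      push Not at h
      linarith

lemma card_sdiff_real {β : Type*} [DecidableEq β] (S T : Finset β) :
    (S.card : ℝ) - T.card ≤ ((S \ T).card : ℝ) := by
  have := Finset.le_card_sdiff T S
  have h2 : S.card ≤ (S \ T).card + T.card := by omega
  have : (S.card : ℝ) ≤ (S \ T).card + T.card := by exact_mod_cast h2
  linarith

lemma edges_real {n : ℕ} (G : SimpleGraph (Fin n)) (A B : Finset (Fin n)) (c : ℝ)
    (hA : 0 < A.card) (hB : 0 < B.card) (h : c ≤ (G.edgeDensity A B : ℝ)) :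
    ∃ a ∈ A, c * B.card ≤ ((B ∩ G.neighborFinset a).card : ℝ) := by
  by_contra hcon
  push Not at hcon
  have h1 : (G.interedges A B).card = ∑ a ∈ A, (B ∩ G.neighborFinset a).card := by
    have : G.interedges A B = (A.sigma (fun a => B ∩ G.neighborFinset a)).map
        (Equiv.sigmaEquivProd _ _).toEmbedding := by
      ext ⟨x, y⟩
      simp [SimpleGraph.mem_interedges_iff, Equiv.sigmaEquivProd]
    rw [this, Finset.card_map, Finset.card_sigma]
  have h2 : ((G.interedges A B).card : ℝ) < ∑ a ∈ A, c * B.card := by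
    rw [h1]
    push_cast
    exact Finset.sum_lt_sum_of_nonempty (Finset.card_pos.mp hA) hcon
  rw [SimpleGraph.edgeDensity_def] at h
  push_cast at h
  have hAr : (0:ℝ) < A.card := by exact_mod_cast hA
  have hBr : (0:ℝ) < B.card := by exact_mod_cast hB
  rw [le_div_iff₀ (by positivity)] at h
  rw [Finset.sum_const, nsmul_eq_mul] at h2
  linarith

/-- If `0 < c ≤ 1/2` and `G` is a graph on `n > 0` vertices in which every vertex has
closed degree (degree plus one) at most `n/16`, and for every two disjoint vertex subsets
`A, B` with `|A| ≥ cn/2` and `|B| ≥ n/16` the edge-density between `A` and `B` is at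
least `c`, then `G` contains `C₅` as an induced subgraph. -/
theorem c5_in_sparse_dense_graph (c : ℝ) (hc0 : 0 < c) (hc : c ≤ 1 / 2)
    (n : ℕ) (hn : 0 < n) (G : SimpleGraph (Fin n))
    (hdeg : ∀ v : Fin n, ((G.degree v : ℝ) + 1) ≤ (n : ℝ) / 16)
    (hdens : ∀ A B : Finset (Fin n), Disjoint A B →
      c * n / 2 ≤ (A.card : ℝ) → (n : ℝ) / 16 ≤ (B.card : ℝ) →
      c ≤ (G.edgeDensity A B : ℝ)) :
    Nonempty (cycleGraph 5 ↪g G) := by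
  have hnR : (0:ℝ) < n := by exact_mod_cast hn
  have hcn : 0 < c * n := by positivity
  -- basic density consequence
  have key : ∀ A B : Finset (Fin n), Disjoint A B →
      c * n / 2 ≤ (A.card : ℝ) → (n : ℝ) / 16 ≤ (B.card : ℝ) →
      ∃ a ∈ A, c * B.card ≤ ((B ∩ G.neighborFinset a).card : ℝ) := by
    intro A B hAB hA hB
    apply edges_real G A B c _ _ (hdens A B hAB hA hB)
    · have : (0:ℝ) < A.card := by linarith
      exact_mod_cast this
    · have : (0:ℝ) < B.card := by linarith
      exact_mod_cast this
  have L1 : ∀ A B : Finset (Fin n), Disjoint A B →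
      c * n / 2 ≤ (A.card : ℝ) → (n : ℝ) / 2 ≤ (B.card : ℝ) →
      ∃ a ∈ A, c * n / 2 ≤ ((B ∩ G.neighborFinset a).card : ℝ) := by
    intro A B hAB hA hB
    obtain ⟨a, ha, h⟩ := key A B hAB hA (by linarith)
    refine ⟨a, ha, ?_⟩
    nlinarith
  have L2 : ∀ A B : Finset (Fin n), Disjoint A B →
      c * n / 2 ≤ (A.card : ℝ) → (n : ℝ) / 16 ≤ (B.card : ℝ) →
      ∃ a ∈ A, ∃ b ∈ B, G.Adj a b := by
    intro A B hAB hA hB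
    obtain ⟨a, ha, h⟩ := key A B hAB hA hB
    have h1 : (0:ℝ) < ((B ∩ G.neighborFinset a).card : ℝ) := by nlinarith
    have h2 : 0 < (B ∩ G.neighborFinset a).card := by exact_mod_cast h1
    obtain ⟨b, hb⟩ := Finset.card_pos.mp h2
    simp at hb
    exact ⟨a, ha, b, hb.1, hb.2⟩
  have hN : ∀ v, ((G.neighborFinset v).card : ℝ) ≤ n / 16 := by
    intro v
    have := hdeg v
    rw [SimpleGraph.card_neighborFinset_eq_degree]
    linarith
  have hNc : ∀ v, ((insert v (G.neighborFinset v)).card : ℝ) ≤ n / 16 := by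
    intro v
    have := hdeg v
    have h := Finset.card_insert_le v (G.neighborFinset v)
    rw [SimpleGraph.card_neighborFinset_eq_degree] at h
    have hr : ((insert v (G.neighborFinset v)).card : ℝ) ≤ G.degree v + 1 := by exact_mod_cast h
    linarith
  have huniv : ((Finset.univ : Finset (Fin n)).card : ℝ) = n := by simp
  -- a vertex of large degree
  obtain ⟨v, hv⟩ : ∃ v, c * n / 2 ≤ ((G.neighborFinset v).card : ℝ) := by
    have hn16 : 16 ≤ n := by
      have := hdeg ⟨0, hn⟩
      have h0 : (0:ℝ) ≤ G.degree (⟨0, hn⟩ : Fin n) := by positivity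
      have : (16:ℝ) ≤ n := by linarith
      exact_mod_cast this
    obtain ⟨A, -, hA⟩ := Finset.exists_subset_card_eq
      (s := (Finset.univ : Finset (Fin n))) (n := n / 2) (by simp; omega)
    have hA1 : (n:ℝ) ≤ 4 * A.card := by
      rw [hA]; exact_mod_cast (by omega : n ≤ 4 * (n / 2))
    have hA2 : 2 * (A.card : ℝ) ≤ n := by
      rw [hA]; exact_mod_cast (by omega : 2 * (n / 2) ≤ n)
    have hB := card_sdiff_real Finset.univ A
    obtain ⟨a, -, ha⟩ := L1 A (Finset.univ \ A) Finset.disjoint_sdiff (by nlinarith)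
      (by linarith)
    refine ⟨a, ha.trans ?_⟩
    exact_mod_cast Finset.card_le_card Finset.inter_subset_right
  set N : Fin n → Finset (Fin n) := fun x => G.neighborFinset x with hNdef
  have memN : ∀ x y, y ∈ N x ↔ G.Adj x y := by intro x y; simp [hNdef]
  obtain ⟨D, hD⟩ : ∃ D, D = Finset.univ \ insert v (N v) := ⟨_, rfl⟩
  have memD : ∀ x, x ∈ D ↔ x ≠ v ∧ ¬ G.Adj v x := by
    intro x; simp [hD, memN]
  have hDcard : 15 * (n:ℝ) / 16 ≤ D.card := by
    have := card_sdiff_real Finset.univ (insert v (N v))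
    have := hNc v
    rw [hD]
    simp only [hNdef] at *
    linarith
  -- neighbours of v cover most of D
  have hcover : 5 * (n:ℝ) / 16 ≤ ((D ∩ (N v).biUnion N).card : ℝ) := by
    by_contra hlt
    push Not at hlt
    have h1 := card_sdiff_real D (D ∩ (N v).biUnion N)
    obtain ⟨a, ha, b, hb, hab⟩ := L2 (N v) (D \ (D ∩ (N v).biUnion N)) (by
        rw [Finset.disjoint_left]
        intro x hx hx2
        simp [memD, memN] at hx hx2
        exact hx2.1.2 hx) hv (by linarith)
    simp only [Finset.mem_sdiff, Finset.mem_inter, Finset.mem_biUnion, not_and, not_exists] at hb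
    exact hb.2 hb.1 a ha ((memN a b).2 hab)
  obtain ⟨X, hXA, hX1, hX2⟩ := grow_set N D (n / 16) (5 * n / 16) (by positivity) (N v)
    (fun a _ => hN a) (by positivity) hcover
  have hXv : ∀ x ∈ X, G.Adj v x := fun x hx => (memN v x).1 (hXA hx)
  obtain ⟨D2, hD2⟩ : ∃ D2, D2 = D \ (D ∩ X.biUnion N) := ⟨_, rfl⟩
  have memD2 : ∀ y, y ∈ D2 ↔ y ∈ D ∧ ∀ x ∈ X, ¬ G.Adj x y := by
    intro y
    simp only [hD2, Finset.mem_sdiff, Finset.mem_inter, Finset.mem_biUnion, not_and, not_exists,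
      memN]
    tauto
  have hD2card : 9 * (n:ℝ) / 16 ≤ D2.card := by
    have := card_sdiff_real D (D ∩ X.biUnion N)
    rw [hD2]
    linarith
  obtain ⟨w, hwA, hw⟩ := L1 (N v) D2 (by
        rw [Finset.disjoint_left]
        intro x hx hx2
        exact ((memD x).1 ((memD2 x).1 hx2).1).2 ((memN v x).1 hx)) hv (by linarith)
  have hvw : G.Adj v w := (memN v w).1 hwA
  obtain ⟨Y, hY⟩ : ∃ Y, Y = D2 ∩ N w := ⟨_, rfl⟩
  have memY : ∀ y, y ∈ Y ↔ y ∈ D2 ∧ G.Adj w y := by intro y; simp [hY, memN]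
  have hYc : c * n / 2 ≤ (Y.card : ℝ) := by rw [hY]; exact hw
  by_contra hno
  -- the part of X nonadjacent to w
  obtain ⟨Xa, hXa⟩ : ∃ Xa, Xa = X.filter (fun x => G.Adj w x) := ⟨_, rfl⟩
  obtain ⟨Xw, hXw⟩ : ∃ Xw, Xw = X.filter (fun x => ¬ G.Adj w x) := ⟨_, rfl⟩
  have hsmall : ((D ∩ Xw.biUnion N).card : ℝ) < 2 * n / 16 := by
    by_contra hge
    push Not at hge
    have h1 := card_sdiff_real (D ∩ Xw.biUnion N) (N w)
    have h2 := hN w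
    obtain ⟨e, he, d, hd, hed⟩ := L2 Y ((D ∩ Xw.biUnion N) \ N w) (by
        rw [Finset.disjoint_left]
        intro x hx hx2
        simp only [Finset.mem_sdiff, memN] at hx2
        exact hx2.2 ((memY x).1 hx).2) hYc (by simp only [hNdef] at *; linarith)
    simp only [Finset.mem_sdiff, Finset.mem_inter, Finset.mem_biUnion, memN] at hd
    obtain ⟨⟨hdD, x, hx, hxd⟩, hwd⟩ := hd
    rw [hXw, Finset.mem_filter] at hx
    have heY := (memY e).1 he
    have heD2 := (memD2 e).1 heY.1
    exact hno (c5_of_verts G v x d e w (hXv x hx.1) hxd hed.symm heY.2.symm hvw.symm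
      ((memD d).1 hdD).2 ((memD e).1 heD2.1).2 (heD2.2 x hx.1) (fun h => hx.2 h.symm)
      (fun h => hwd h.symm))
  have hXacard : 3 * (n:ℝ) / 16 ≤ ((D ∩ Xa.biUnion N).card : ℝ) := by
    have h3 : D ∩ X.biUnion N ⊆ (D ∩ Xa.biUnion N) ∪ (D ∩ Xw.biUnion N) := by
      intro y
      simp only [hXa, hXw, Finset.mem_inter, Finset.mem_biUnion, Finset.mem_union,
        Finset.mem_filter]
      rintro ⟨hy, x, hx, hxy⟩
      by_cases h : G.Adj w x
      · exact Or.inl ⟨hy, x, ⟨hx, h⟩, hxy⟩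
      · exact Or.inr ⟨hy, x, ⟨hx, h⟩, hxy⟩
    have h4 := (Finset.card_le_card h3).trans (Finset.card_union_le _ _)
    have h5 : ((D ∩ X.biUnion N).card : ℝ) ≤
      (D ∩ Xa.biUnion N).card + (D ∩ Xw.biUnion N).card := by exact_mod_cast h4
    linarith
  -- centre w
  obtain ⟨y, hyY, hy⟩ := L1 Y (D2 \ insert w (N w)) (by
        rw [Finset.disjoint_left]
        intro x hx hx2
        simp only [Finset.mem_sdiff, Finset.mem_insert, memN, not_or] at hx2
        exact hx2.2.2 ((memY x).1 hx).2) hYc (by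
        have h1 := card_sdiff_real D2 (insert w (N w))
        have h2 := hNc w
        simp only [hNdef] at *
        linarith)
  have hE1 := card_sdiff_real (D ∩ Xa.biUnion N) (insert w (N w))
  have hE2 := card_sdiff_real ((D ∩ Xa.biUnion N) \ insert w (N w)) (N y)
  have h2 := hNc w
  have h3 := hN y
  obtain ⟨e, he, d, hd, hed⟩ := L2 ((D2 \ insert w (N w)) ∩ N y)
    (((D ∩ Xa.biUnion N) \ insert w (N w)) \ N y) (by
        rw [Finset.disjoint_left]
        intro x hx hx2
        exact (Finset.mem_sdiff.1 hx2).2 (Finset.mem_inter.1 hx).2) hy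
      (by simp only [hNdef] at *; linarith)
  simp only [Finset.mem_sdiff, Finset.mem_inter, Finset.mem_biUnion, Finset.mem_insert, memN,
    not_or] at hd he
  obtain ⟨⟨⟨hdD, x, hx, hxd⟩, -, hwd⟩, hyd⟩ := hd
  obtain ⟨⟨heD2, -, hwe⟩, hye⟩ := he
  rw [hXa, Finset.mem_filter] at hx
  have hyYw := (memY y).1 hyY
  exact hno (c5_of_verts G w x d e y hx.2 hxd hed.symm hye.symm hyYw.2.symm
    hwd hwe (((memD2 e).1 heD2).2 x hx.1) (((memD2 y).1 hyYw.1).2 x hx.1)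
    (fun h => hyd h.symm))
end

section
/- There exists ε > 0 such that for every real c with 0 ≤ c ≤ 1/2 and every C₅-free graph G with n > 1 vertices, there exist disjoint nonempty subsets A, B ⊆ V(G) with |A| ≥ εcn and |B| ≥ εn such that the edge-density between A and B is either at most c or at least 1 − c. -/
open SimpleGraph
open scoped Classical

/-- Neighbours of `a` inside `B`. -/
noncomputable def nb {V : Type} (G : SimpleGraph V) (a : V) (B : Finset V) : Finset V :=
  B.filter (fun x => G.Adj a x)

/-- No induced five-cycle, spelled out. -/
def NoC5 {V : Type} (G : SimpleGraph V) : Prop :=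
  ∀ a b c d e : V, G.Adj a b → G.Adj b c → G.Adj c d → G.Adj d e → G.Adj e a →
    ¬ G.Adj a c → ¬ G.Adj a d → ¬ G.Adj b d → ¬ G.Adj b e → ¬ G.Adj c e → False

theorem mem_nb {V : Type} {G : SimpleGraph V} {a x : V} {B : Finset V} :
    x ∈ nb G a B ↔ x ∈ B ∧ G.Adj a x := by
  simp [nb]

theorem nb_subset {V : Type} {G : SimpleGraph V} {a : V} {B : Finset V} : nb G a B ⊆ B :=
  Finset.filter_subset _ _

theorem noC5_of_free {V : Type} {G : SimpleGraph V} (h : C5Free G) : NoC5 G := by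
  intro a b c d e hab hbc hcd hde hea hac had hbd hbe hce
  apply h
  have hba := hab.symm
  have hcb := hbc.symm
  have hdc := hcd.symm
  have hed := hde.symm
  have hae := hea.symm
  have hca : ¬ G.Adj c a := fun h => hac h.symm
  have hda : ¬ G.Adj d a := fun h => had h.symm
  have hdb : ¬ G.Adj d b := fun h => hbd h.symm
  have heb : ¬ G.Adj e b := fun h => hbe h.symm
  have hec : ¬ G.Adj e c := fun h => hce h.symm
  have n1 : a ≠ c := by rintro rfl; exact had hcd
  have n2 : a ≠ d := by rintro rfl; exact hac hdc
  have n3 : b ≠ d := by rintro rfl; exact hbe hde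
  have n4 : b ≠ e := by rintro rfl; exact hbd hed
  have n5 : c ≠ e := by rintro rfl; exact hac hae
  have m1 := hab.ne
  have m2 := hbc.ne
  have m3 := hcd.ne
  have m4 := hde.ne
  have m5 := hea.ne
  refine ⟨⟨⟨![a, b, c, d, e], ?_⟩, ?_⟩⟩
  · intro i j hij
    fin_cases i <;> fin_cases j <;> simp_all [eq_comm]
  · intro i j
    have hdec : ∀ i j : Fin 5, (cycleGraph 5).Adj i j ↔ (i - j = 1 ∨ j - i = 1) := by
      intro i j
      exact cycleGraph_adj
    rw [hdec]
    change G.Adj (![a, b, c, d, e] i) (![a, b, c, d, e] j) ↔ _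
    fin_cases i <;> fin_cases j <;>
      first
      | exact iff_of_true (by simp [*]) (by decide)
      | exact iff_of_false (by simp [*]) (by decide)

theorem noC5_compl {V : Type} {G : SimpleGraph V} (h : NoC5 G) : NoC5 Gᶜ := by
  intro a b c d e hab hbc hcd hde hea hac had hbd hbe hce
  have n1 : a ≠ c := by rintro rfl; exact had hcd
  have n2 : a ≠ d := by rintro rfl; exact hac hcd.symm
  have n3 : b ≠ d := by rintro rfl; exact hbe hde
  have n4 : b ≠ e := by rintro rfl; exact hbd hde.symm
  have n5 : c ≠ e := by rintro rfl; exact hac hea.symm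
  simp only [SimpleGraph.compl_adj, not_and, not_not] at *
  exact h a c e b d (hac n1) (hce n5) (hbe n4).symm (hbd n3) (had n2).symm
    (fun h => hea.2 h.symm) hab.2 (fun h => hbc.2 h.symm) hcd.2 (fun h => hde.2 h.symm)

/-- If all vertices of `A` have few neighbours in `B`, the density is small. -/
theorem density_le {V : Type} {G : SimpleGraph V} [DecidableRel G.Adj] {A B : Finset V} {c : ℝ}
    (hA : A.Nonempty) (hB : B.Nonempty)
    (h : ∀ a ∈ A, ((nb G a B).card : ℝ) ≤ c * B.card) : (G.edgeDensity A B : ℝ) ≤ c := by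
  have hc : (G.interedges A B).card = ∑ a ∈ A, (nb G a B).card := by
    unfold SimpleGraph.interedges Rel.interedges nb
    rw [Finset.card_filter, Finset.sum_product]
    simp only [Finset.card_filter]
    congr!
  rw [SimpleGraph.edgeDensity_def, hc]
  push_cast
  have : (0:ℝ) < A.card := by exact_mod_cast hA.card_pos
  have : (0:ℝ) < B.card := by exact_mod_cast hB.card_pos
  rw [div_le_iff₀ (by positivity)]
  calc ∑ a ∈ A, ((nb G a B).card : ℝ) ≤ ∑ a ∈ A, c * B.card := Finset.sum_le_sum h
    _ = _ := by simp; ring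

theorem density_ge {V : Type} {G : SimpleGraph V} {A B : Finset V} {c : ℝ}
    (hA : A.Nonempty) (hB : B.Nonempty) (hd : Disjoint A B)
    (h : ∀ a ∈ A, ((nb Gᶜ a B).card : ℝ) ≤ c * B.card) : 1 - c ≤ (G.edgeDensity A B : ℝ) := by
  have h1 := density_le (G := Gᶜ) hA hB h
  have h2 := G.edgeDensity_add_edgeDensity_compl hA hB hd
  have h3 : (G.edgeDensity A B : ℝ) + (Gᶜ.edgeDensity A B : ℝ) = 1 := by
    rw [← Rat.cast_add]
    exact_mod_cast h2
  linarith
theorem card_diff_ge {V : Type} (S T : Finset V) {x y : ℝ} (hS : x ≤ S.card)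
    (hT : (T.card : ℝ) ≤ y) : x - y ≤ ((S \ T).card : ℝ) := by
  have h := Finset.card_sdiff_add_card_inter S T
  rw [Finset.inter_comm] at h
  have h' : ((S \ T).card : ℝ) + ((T ∩ S).card : ℝ) = S.card := by exact_mod_cast h
  have h'' : ((T ∩ S).card : ℝ) ≤ T.card := by
    exact_mod_cast Finset.card_le_card Finset.inter_subset_left
  linarith

/-- covered part of `Q` -/
noncomputable def cov {V : Type} (G : SimpleGraph V) (A Q : Finset V) : Finset V :=
  Q.filter (fun x => ∃ a ∈ A, G.Adj a x)

theorem cov_insert {V : Type} (G : SimpleGraph V) (A Q : Finset V) (a : V) :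
    cov G (insert a A) Q = nb G a Q ∪ cov G A Q := by
  ext x
  simp only [cov, nb, Finset.mem_filter, Finset.mem_insert, Finset.mem_union, exists_eq_or_imp]
  tauto

/-- Final step of the sparse case: all sets chosen. -/
theorem sparse_core {V : Type} {G : SimpleGraph V} (hG : NoC5 G) {c α β : ℝ} (hc : 0 < c)
    (hβ : 0 < β)
    (hE : ∀ A B : Finset V, Disjoint A B → α ≤ A.card → β ≤ B.card →
      ∃ a ∈ A, c * B.card < ((nb G a B).card : ℝ))
    {Q1 Q2 A A' : Finset V} {v : V} (hd : Disjoint Q1 Q2) (hdA : Disjoint A' Q2)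
    (hvA : ∀ a ∈ A, G.Adj v a) (hvA' : ∀ a ∈ A', G.Adj v a)
    (hA' : α ≤ A'.card)
    (hA1 : ∀ a ∈ A', ((nb G a Q1).card : ℝ) ≤ Q1.card / 32)
    (hA2 : ∀ a ∈ A', ((nb G a Q2).card : ℝ) ≤ Q2.card / 32)
    (hv1 : ((nb G v Q1).card : ℝ) ≤ Q1.card / 32)
    (hv2 : ((nb G v Q2).card : ℝ) ≤ Q2.card / 32)
    (h21 : ∀ a ∈ Q2, ((nb G a Q1).card : ℝ) ≤ Q1.card / 32)
    (hs1 : 16 * β ≤ Q1.card) (hs2 : 16 * β ≤ Q2.card) (hs3 : 3 * α ≤ c * Q2.card)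
    (hc1 : (Q1.card : ℝ) / 4 ≤ (cov G A Q1).card)
    (hc2 : ((cov G A Q2).card : ℝ) ≤ Q2.card / 2) : False := by
  have q1 : (0:ℝ) ≤ Q1.card := by positivity
  have q2 : (0:ℝ) ≤ Q2.card := by positivity
  -- uncovered part of Q2
  set U := Q2 \ cov G A Q2 with hU
  have hUc : (Q2.card : ℝ) / 2 ≤ U.card := by
    have := card_diff_ge Q2 (cov G A Q2) le_rfl (y := Q2.card / 2)
      hc2
    linarith
  have hUA : ∀ x ∈ U, x ∈ Q2 ∧ ∀ a ∈ A, ¬ G.Adj a x := by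
    intro x hx
    simp only [hU, cov, Finset.mem_sdiff, Finset.mem_filter] at hx
    refine ⟨hx.1, fun a ha h => hx.2 ⟨hx.1, a, ha, h⟩⟩
  set W0 := U \ nb G v Q2 with hW0
  have hW0c : (Q2.card : ℝ) * (15 / 32) ≤ W0.card := by
    have := card_diff_ge U (nb G v Q2) hUc (y := Q2.card / 32)
      hv2
    linarith
  have hW0U : W0 ⊆ U := Finset.sdiff_subset
  have hUQ : U ⊆ Q2 := Finset.sdiff_subset
  obtain ⟨s, hs, hsW⟩ := hE A' W0 (hdA.mono_right (hW0U.trans hUQ)) hA' (by linarith)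
  set W := nb G s W0 with hW
  have hWc : α ≤ W.card := by nlinarith
  have hWQ : W ⊆ Q2 := nb_subset.trans (hW0U.trans hUQ)
  have hWp : ∀ w ∈ W, w ∈ Q2 ∧ G.Adj s w ∧ ¬ G.Adj v w ∧ ∀ a ∈ A, ¬ G.Adj a w := by
    intro w hw
    have h1 := mem_nb.1 hw
    have h2 := hUA w (hW0U h1.1)
    refine ⟨h2.1, h1.2, fun h => ?_, h2.2⟩
    exact (Finset.mem_sdiff.1 h1.1).2 (mem_nb.2 ⟨h2.1, h⟩)
  -- D
  set D := (cov G A Q1 \ nb G v Q1) \ nb G s Q1 with hD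
  have hDc : (Q1.card : ℝ) * (6 / 32) ≤ D.card := by
    have h1 := card_diff_ge (cov G A Q1) (nb G v Q1) hc1 (y := Q1.card / 32)
      hv1
    have h2 := card_diff_ge (cov G A Q1 \ nb G v Q1) (nb G s Q1) h1 (y := Q1.card / 32)
      (hA1 s hs)
    linarith
  have hDp : ∀ d ∈ D, d ∈ Q1 ∧ ¬ G.Adj v d ∧ ¬ G.Adj s d ∧ ∃ a ∈ A, G.Adj a d := by
    intro d hd
    simp only [hD, cov, nb, Finset.mem_sdiff, Finset.mem_filter] at hd
    tauto
  set D1 := D.filter (fun d => ∃ a ∈ A, G.Adj a d ∧ ¬ G.Adj s a) with hD1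
  set D2 := D.filter (fun d => ∃ a ∈ A, G.Adj a d ∧ G.Adj s a) with hD2
  have hDD : D ⊆ D1 ∪ D2 := by
    intro d hd
    obtain ⟨-, -, -, a, ha, had⟩ := hDp d hd
    rw [Finset.mem_union, hD1, hD2, Finset.mem_filter, Finset.mem_filter]
    by_cases h : G.Adj s a
    · right; exact ⟨hd, a, ha, had, h⟩
    · left; exact ⟨hd, a, ha, had, h⟩
  have hDsum : (D.card : ℝ) ≤ D1.card + D2.card := by
    exact_mod_cast (Finset.card_le_card hDD).trans (Finset.card_union_le _ _)
  have hD1Q : D1 ⊆ Q1 := fun d hd => (hDp d (Finset.mem_filter.1 hd).1).1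
  have hD2Q : D2 ⊆ Q1 := fun d hd => (hDp d (Finset.mem_filter.1 hd).1).1
  by_cases hcase : (Q1.card : ℝ) * (3 / 32) ≤ D1.card
  · obtain ⟨w, hw, hwD⟩ := hE W D1 (hd.symm.mono hWQ hD1Q) hWc (by linarith)
    have hpos : (0:ℝ) < (nb G w D1).card := lt_of_le_of_lt (by positivity) hwD
    obtain ⟨d, hd'⟩ := Finset.card_pos.1 (by exact_mod_cast hpos)
    obtain ⟨hd1, hwd⟩ := mem_nb.1 hd'
    obtain ⟨hdD, a, ha, had, hsa⟩ := Finset.mem_filter.1 hd1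
    obtain ⟨-, hvd, hsd, -⟩ := hDp d hdD
    obtain ⟨-, hsw, hvw, hAw⟩ := hWp w hw
    exact hG v a d w s (hvA a ha) had hwd.symm hsw.symm (hvA' s hs).symm hvd hvw (hAw a ha)
      (fun h => hsa h.symm) (fun h => hsd h.symm)
  · have hD2c : (Q1.card : ℝ) * (3 / 32) ≤ D2.card := by linarith
    set R := U \ nb G s Q2 with hR
    have hRc : (Q2.card : ℝ) * (15 / 32) ≤ R.card := by
      have := card_diff_ge U (nb G s Q2) hUc (y := Q2.card / 32)
        (hA2 s hs)
      linarith
    have hRQ : R ⊆ Q2 := Finset.sdiff_subset.trans hUQ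
    have hRs : ∀ x ∈ R, ¬ G.Adj s x := fun x hx h =>
      (Finset.mem_sdiff.1 hx).2 (mem_nb.2 ⟨hRQ hx, h⟩)
    have hWR : Disjoint W R := by
      rw [Finset.disjoint_left]
      intro x hx hxR
      exact hRs x hxR (hWp x hx).2.1
    obtain ⟨b, hb, hbR⟩ := hE W R hWR hWc (by linarith)
    obtain ⟨hbQ, hsb, hvb, hAb⟩ := hWp b hb
    have hXc : α ≤ (nb G b R).card := by nlinarith
    have hD3 : β ≤ ((D2 \ nb G b Q1).card : ℝ) := by
      have := card_diff_ge D2 (nb G b Q1) hD2c (y := Q1.card / 32)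
        (h21 b hbQ)
      linarith
    obtain ⟨x, hx, hxD⟩ := hE (nb G b R) (D2 \ nb G b Q1)
      (hd.symm.mono (nb_subset.trans hRQ) (Finset.sdiff_subset.trans hD2Q)) hXc hD3
    have hpos : (0:ℝ) < (nb G x (D2 \ nb G b Q1)).card := lt_of_le_of_lt (by positivity) hxD
    obtain ⟨d, hd'⟩ := Finset.card_pos.1 (by exact_mod_cast hpos)
    obtain ⟨hd1, hxd⟩ := mem_nb.1 hd'
    obtain ⟨hd2, hbd⟩ := Finset.mem_sdiff.1 hd1
    obtain ⟨hdD, a, ha, had, hsa⟩ := Finset.mem_filter.1 hd2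
    obtain ⟨hdQ, hvd, hsd, -⟩ := hDp d hdD
    obtain ⟨hxR, hbx⟩ := mem_nb.1 hx
    have hbd' : ¬ G.Adj b d := fun h => hbd (mem_nb.2 ⟨hdQ, h⟩)
    have hax : ¬ G.Adj a x := (hUA x (Finset.sdiff_subset hxR)).2 a ha
    exact hG x b s a d hbx.symm hsb.symm hsa had hxd.symm (fun h => hRs x hxR h.symm)
      (fun h => hax h.symm) (fun h => hAb a ha h.symm) hbd' hsd

/-- Sparse case. -/
theorem sparse_case {V : Type} {G : SimpleGraph V} (hG : NoC5 G) {c α β : ℝ} (hc : 0 < c)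
    (hβ : 0 < β) (hα : 1 ≤ α)
    (hE : ∀ A B : Finset V, Disjoint A B → α ≤ A.card → β ≤ B.card →
      ∃ a ∈ A, c * B.card < ((nb G a B).card : ℝ))
    {P Q1 Q2 : Finset V} (hd : Disjoint Q1 Q2) (hP1 : Disjoint P Q1) (hP2 : Disjoint P Q2)
    (hA1 : ∀ a ∈ P, ((nb G a Q1).card : ℝ) ≤ Q1.card / 32)
    (hA2 : ∀ a ∈ P, ((nb G a Q2).card : ℝ) ≤ Q2.card / 32)
    (h12 : ∀ a ∈ Q1, ((nb G a Q2).card : ℝ) ≤ Q2.card / 32)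
    (h21 : ∀ a ∈ Q2, ((nb G a Q1).card : ℝ) ≤ Q1.card / 32)
    (hs1 : 16 * β ≤ Q1.card) (hs2 : 16 * β ≤ Q2.card) (hs3 : 3 * α ≤ c * Q1.card)
    (hs4 : 3 * α ≤ c * Q2.card)
    (hp1 : β + α + 1 ≤ P.card) (hp2 : 3 * α ≤ c * (P.card - α - 1)) : False := by
  have hcα : (⌈α⌉₊ : ℝ) < α + 1 := Nat.ceil_lt_add_one (by linarith)
  have hcα' : α ≤ (⌈α⌉₊ : ℝ) := Nat.le_ceil α
  obtain ⟨P1, hP1s, hP1c⟩ := Finset.exists_subset_card_eq (s := P) (n := ⌈α⌉₊)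
    (by have : (⌈α⌉₊ : ℝ) ≤ P.card := by linarith
        exact_mod_cast this)
  have hP2c : (P.card : ℝ) - α - 1 ≤ (P \ P1).card := by
    have := card_diff_ge P P1 le_rfl (y := α + 1)
      (by rw [hP1c]; exact hcα.le)
    linarith
  obtain ⟨v, hv, hvc⟩ := hE P1 (P \ P1) Finset.disjoint_sdiff (by rw [hP1c]; exact hcα')
    (by linarith)
  have hvP : v ∈ P := hP1s hv
  set M := nb G v (P \ P1) with hM
  have hMP : M ⊆ P := nb_subset.trans Finset.sdiff_subset
  have hMc : 3 * α ≤ M.card := by nlinarith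
  obtain ⟨A0, hA0s, hA0c⟩ := Finset.exists_subset_card_eq (s := M) (n := ⌈α⌉₊)
    (by have : (⌈α⌉₊ : ℝ) ≤ M.card := by linarith
        exact_mod_cast this)
  have hA'c : α ≤ (M \ A0).card := by
    have := card_diff_ge M A0 hMc (y := α + 1)
      (by rw [hA0c]; exact hcα.le)
    linarith
  have hadj : ∀ a ∈ M, G.Adj v a := fun a ha => (mem_nb.1 ha).2
  -- small coverage predicate
  let small : Finset V → Prop := fun S =>
    ((cov G S Q1).card : ℝ) < Q1.card / 4 ∧ ((cov G S Q2).card : ℝ) < Q2.card / 4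
  have hnot : ¬ small A0 := by
    intro h
    have h1 := card_diff_ge Q1 (cov G A0 Q1) le_rfl (y := Q1.card / 4)
      h.1.le
    obtain ⟨a, ha, hac⟩ := hE A0 (Q1 \ cov G A0 Q1)
      (hP1.mono (hA0s.trans hMP) Finset.sdiff_subset) (by rw [hA0c]; exact hcα') (by linarith)
    have hpos : (0:ℝ) < (nb G a (Q1 \ cov G A0 Q1)).card := lt_of_le_of_lt (by positivity) hac
    obtain ⟨d, hd'⟩ := Finset.card_pos.1 (by exact_mod_cast hpos)
    obtain ⟨hd1, had⟩ := mem_nb.1 hd'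
    obtain ⟨hd2, hd3⟩ := Finset.mem_sdiff.1 hd1
    exact hd3 (Finset.mem_filter.2 ⟨hd2, a, ha, had⟩)
  have key : ∀ S : Finset V, S ⊆ A0 → small S ∨ ∃ A ⊆ A0,
      ((Q1.card : ℝ) / 4 ≤ (cov G A Q1).card ∨ (Q2.card : ℝ) / 4 ≤ (cov G A Q2).card) ∧
      ((cov G A Q1).card : ℝ) ≤ Q1.card / 2 ∧ ((cov G A Q2).card : ℝ) ≤ Q2.card / 2 := by
    intro S
    induction S using Finset.induction_on with
    | empty =>
      intro _
      left
      simp only [small, cov]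
      constructor <;> simp <;> [skip; skip]
      · by_contra h
        push Not at h
        have : (Q1.card : ℝ) = 0 := by simp [h]
        linarith
      · by_contra h
        push Not at h
        have : (Q2.card : ℝ) = 0 := by simp [h]
        linarith
    | insert a S ha ih =>
      intro hS
      rcases ih ((Finset.subset_insert a S).trans hS) with h | h
      · by_cases hsm : small (insert a S)
        · exact Or.inl hsm
        · right
          have haP : a ∈ P := hMP (hA0s (hS (Finset.mem_insert_self a S)))
          refine ⟨insert a S, hS, ?_, ?_, ?_⟩
          · simp only [small, not_and_or, not_lt] at hsm
            exact hsm
          · rw [cov_insert]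
            have : ((nb G a Q1 ∪ cov G S Q1).card : ℝ) ≤ (nb G a Q1).card + (cov G S Q1).card := by
              exact_mod_cast Finset.card_union_le _ _
            linarith [hA1 a haP, h.1]
          · rw [cov_insert]
            have : ((nb G a Q2 ∪ cov G S Q2).card : ℝ) ≤ (nb G a Q2).card + (cov G S Q2).card := by
              exact_mod_cast Finset.card_union_le _ _
            linarith [hA2 a haP, h.2]
      · exact Or.inr h
  rcases key A0 subset_rfl with h | ⟨A, hA, hor, hle1, hle2⟩
  · exact hnot h
  have hMA : M \ A0 ⊆ P := Finset.sdiff_subset.trans hMP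
  rcases hor with h | h
  · exact sparse_core hG hc hβ hE hd (hP2.mono_left hMA)
      (fun a ha => hadj a (hA0s (hA ha))) (fun a ha => hadj a (Finset.sdiff_subset ha)) hA'c
      (fun a ha => hA1 a (hMA ha)) (fun a ha => hA2 a (hMA ha)) (hA1 v hvP) (hA2 v hvP) h21
      hs1 hs2 hs4 h hle2
  · exact sparse_core hG hc hβ hE hd.symm (hP1.mono_left hMA)
      (fun a ha => hadj a (hA0s (hA ha))) (fun a ha => hadj a (Finset.sdiff_subset ha)) hA'c
      (fun a ha => hA2 a (hMA ha)) (fun a ha => hA1 a (hMA ha)) (hA2 v hvP) (hA1 v hvP) h12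
      hs2 hs1 hs3 h hle1

theorem split_off {V : Type} (X : Finset V) (k m : ℕ) (h : k + m ≤ X.card) :
    ∃ Y ⊆ X, Y.card = k ∧ m ≤ (X \ Y).card := by
  obtain ⟨Y, hY, hc⟩ := Finset.exists_subset_card_eq (s := X) (n := k) (by omega)
  refine ⟨Y, hY, hc, ?_⟩
  rw [Finset.card_sdiff_of_subset hY]
  omega

/-- The Erdős–Hajnal lemma for `C₅`: a linear sized pair which is very sparse or very dense. -/
theorem eh_pair {V : Type} {G : SimpleGraph V} (hG : NoC5 G) (X : Finset V) (hX : 5 ≤ X.card) :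
    ∃ A ⊆ X, ∃ B ⊆ X, Disjoint A B ∧ (X.card : ℝ) / (40 * 64 ^ 4) ≤ A.card ∧
      (X.card : ℝ) / (40 * 64 ^ 4) ≤ B.card ∧
      ∃ H : SimpleGraph V, (H = G ∨ H = Gᶜ) ∧ ∀ a ∈ A, ((nb H a B).card : ℝ) ≤ B.card / 64 := by
  by_contra hno
  set s : ℝ := (X.card : ℝ) / (40 * 64 ^ 4) with hs
  have hbad : ∀ H : SimpleGraph V, (H = G ∨ H = Gᶜ) → ∀ A ⊆ X, ∀ B ⊆ X, Disjoint A B →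
      s ≤ B.card → ((A.filter (fun a => ((nb H a B).card : ℝ) ≤ B.card / 64)).card : ℝ) < s := by
    intro H hH A hA B hB hd hsB
    by_contra hlt
    push Not at hlt
    exact hno ⟨_, (Finset.filter_subset _ _).trans hA, B, hB,
      hd.mono_left (Finset.filter_subset _ _), hlt, hsB, H, hH,
      fun a ha => (Finset.mem_filter.1 ha).2⟩
  have pick : ∀ H1 H2 H3 H4 : SimpleGraph V, (H1 = G ∨ H1 = Gᶜ) → (H2 = G ∨ H2 = Gᶜ) →
      (H3 = G ∨ H3 = Gᶜ) → (H4 = G ∨ H4 = Gᶜ) →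
      ∀ A ⊆ X, ∀ B1 ⊆ X, ∀ B2 ⊆ X, ∀ B3 ⊆ X, ∀ B4 ⊆ X,
      Disjoint A B1 → Disjoint A B2 → Disjoint A B3 → Disjoint A B4 →
      4 * s ≤ A.card → s ≤ B1.card → s ≤ B2.card → s ≤ B3.card → s ≤ B4.card →
      ∃ a ∈ A, (B1.card : ℝ) / 64 < (nb H1 a B1).card ∧ (B2.card : ℝ) / 64 < (nb H2 a B2).card ∧
        (B3.card : ℝ) / 64 < (nb H3 a B3).card ∧ (B4.card : ℝ) / 64 < (nb H4 a B4).card := by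
    intro H1 H2 H3 H4 e1 e2 e3 e4 A hA B1 i1 B2 i2 B3 i3 B4 i4 d1 d2 d3 d4 hsA s1 s2 s3 s4
    have b1 := hbad H1 e1 A hA B1 i1 d1 s1
    have b2 := hbad H2 e2 A hA B2 i2 d2 s2
    have b3 := hbad H3 e3 A hA B3 i3 d3 s3
    have b4 := hbad H4 e4 A hA B4 i4 d4 s4
    by_contra hcon
    push Not at hcon
    set F1 := A.filter (fun a => ((nb H1 a B1).card : ℝ) ≤ B1.card / 64)
    set F2 := A.filter (fun a => ((nb H2 a B2).card : ℝ) ≤ B2.card / 64)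
    set F3 := A.filter (fun a => ((nb H3 a B3).card : ℝ) ≤ B3.card / 64)
    set F4 := A.filter (fun a => ((nb H4 a B4).card : ℝ) ≤ B4.card / 64)
    have hsub : A ⊆ (F1 ∪ F2) ∪ (F3 ∪ F4) := by
      intro a ha
      simp only [F1, F2, F3, F4, Finset.mem_union, Finset.mem_filter, ha, true_and]
      by_contra hh
      push Not at hh
      exact absurd (hcon a ha hh.1.1 hh.1.2 hh.2.1) (not_le.2 hh.2.2)
    have c1 := Finset.card_le_card hsub
    have c2 := Finset.card_union_le (F1 ∪ F2) (F3 ∪ F4)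
    have c3 := Finset.card_union_le F1 F2
    have c4 := Finset.card_union_le F3 F4
    have c5 : (A.card : ℝ) ≤ F1.card + F2.card + F3.card + F4.card := by
      exact_mod_cast (by omega : A.card ≤ F1.card + F2.card + F3.card + F4.card)
    linarith
  obtain ⟨k, hk⟩ : ∃ k, k = X.card / 5 := ⟨_, rfl⟩
  obtain ⟨V1, hV1, c1, r1⟩ := split_off X k (4 * k) (by omega)
  obtain ⟨V2, hV2, c2, r2⟩ := split_off (X \ V1) k (3 * k) (by omega)
  obtain ⟨V3, hV3, c3, r3⟩ := split_off ((X \ V1) \ V2) k (2 * k) (by omega)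
  obtain ⟨V4, hV4, c4, r4⟩ := split_off (((X \ V1) \ V2) \ V3) k k (by omega)
  obtain ⟨V5, hV5, c5, -⟩ := split_off ((((X \ V1) \ V2) \ V3) \ V4) k 0 (by omega)
  have t4 : (((X \ V1) \ V2) \ V3) \ V4 ⊆ ((X \ V1) \ V2) \ V3 := Finset.sdiff_subset
  have t3 : ((X \ V1) \ V2) \ V3 ⊆ (X \ V1) \ V2 := Finset.sdiff_subset
  have t2 : (X \ V1) \ V2 ⊆ X \ V1 := Finset.sdiff_subset
  have t1 : X \ V1 ⊆ X := Finset.sdiff_subset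
  have d12 : Disjoint V1 V2 := Finset.disjoint_sdiff.mono_right hV2
  have d13 : Disjoint V1 V3 := Finset.disjoint_sdiff.mono_right (hV3.trans t2)
  have d14 : Disjoint V1 V4 := Finset.disjoint_sdiff.mono_right (hV4.trans (t3.trans t2))
  have d15 : Disjoint V1 V5 :=
    Finset.disjoint_sdiff.mono_right (hV5.trans (t4.trans (t3.trans t2)))
  have d23 : Disjoint V2 V3 := Finset.disjoint_sdiff.mono_right hV3
  have d24 : Disjoint V2 V4 := Finset.disjoint_sdiff.mono_right (hV4.trans t3)
  have d25 : Disjoint V2 V5 := Finset.disjoint_sdiff.mono_right (hV5.trans (t4.trans t3))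
  have d34 : Disjoint V3 V4 := Finset.disjoint_sdiff.mono_right hV4
  have d35 : Disjoint V3 V5 := Finset.disjoint_sdiff.mono_right (hV5.trans t4)
  have d45 : Disjoint V4 V5 := Finset.disjoint_sdiff.mono_right hV5
  have x2 : V2 ⊆ X := hV2.trans t1
  have x3 : V3 ⊆ X := hV3.trans (t2.trans t1)
  have x4 : V4 ⊆ X := hV4.trans (t3.trans (t2.trans t1))
  have x5 : V5 ⊆ X := hV5.trans (t4.trans (t3.trans (t2.trans t1)))
  have hkX : (X.card : ℝ) ≤ 10 * k := by exact_mod_cast (by omega : X.card ≤ 10 * k)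
  have hXpos : (0:ℝ) < X.card := by exact_mod_cast (by omega : 0 < X.card)
  have hks : 4 * 64 ^ 4 * s ≤ k := by
    rw [hs]
    have : 4 * 64 ^ 4 * ((X.card : ℝ) / (40 * 64 ^ 4)) = X.card / 10 := by ring
    linarith
  have hspos : 0 < s := by positivity
  have k1 : (V1.card : ℝ) = k := by rw [c1]
  have k2 : (V2.card : ℝ) = k := by rw [c2]
  have k3 : (V3.card : ℝ) = k := by rw [c3]
  have k4 : (V4.card : ℝ) = k := by rw [c4]
  have k5 : (V5.card : ℝ) = k := by rw [c5]
  have eG : G = G ∨ G = Gᶜ := Or.inl rfl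
  have eC : Gᶜ = G ∨ Gᶜ = Gᶜ := Or.inr rfl
  obtain ⟨v1, -, g2, g3, g4, g5⟩ := pick G Gᶜ Gᶜ G eG eC eC eG V1 hV1 V2 x2 V3 x3 V4 x4 V5 x5
    d12 d13 d14 d15 (by linarith) (by linarith) (by linarith) (by linarith) (by linarith)
  set B2 := nb G v1 V2 with hB2
  set B3 := nb Gᶜ v1 V3 with hB3
  set B4 := nb Gᶜ v1 V4 with hB4
  set B5 := nb G v1 V5 with hB5
  have s2 : B2 ⊆ V2 := nb_subset
  have s3 : B3 ⊆ V3 := nb_subset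
  have s4 : B4 ⊆ V4 := nb_subset
  have s5 : B5 ⊆ V5 := nb_subset
  obtain ⟨v2, hv2, g3', g4', g5', -⟩ := pick G Gᶜ Gᶜ Gᶜ eG eC eC eC B2 (s2.trans x2)
    B3 (s3.trans x3) B4 (s4.trans x4) B5 (s5.trans x5) B5 (s5.trans x5)
    (d23.mono s2 s3) (d24.mono s2 s4) (d25.mono s2 s5) (d25.mono s2 s5)
    (by linarith) (by linarith) (by linarith) (by linarith) (by linarith)
  set C3 := nb G v2 B3 with hC3
  set C4 := nb Gᶜ v2 B4 with hC4
  set C5 := nb Gᶜ v2 B5 with hC5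
  have u3 : C3 ⊆ B3 := nb_subset
  have u4 : C4 ⊆ B4 := nb_subset
  have u5 : C5 ⊆ B5 := nb_subset
  obtain ⟨v3, hv3, g4'', g5'', -, -⟩ := pick G Gᶜ Gᶜ Gᶜ eG eC eC eC C3
    (u3.trans (s3.trans x3)) C4 (u4.trans (s4.trans x4)) C5 (u5.trans (s5.trans x5))
    C5 (u5.trans (s5.trans x5)) C5 (u5.trans (s5.trans x5))
    (d34.mono (u3.trans s3) (u4.trans s4)) (d35.mono (u3.trans s3) (u5.trans s5))
    (d35.mono (u3.trans s3) (u5.trans s5)) (d35.mono (u3.trans s3) (u5.trans s5))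
    (by linarith) (by linarith) (by linarith) (by linarith) (by linarith)
  set D4 := nb G v3 C4 with hD4
  set D5 := nb Gᶜ v3 C5 with hD5
  have w4 : D4 ⊆ C4 := nb_subset
  have w5 : D5 ⊆ C5 := nb_subset
  have z4 : D4 ⊆ V4 := w4.trans (u4.trans s4)
  have z5 : D5 ⊆ V5 := w5.trans (u5.trans s5)
  obtain ⟨v4, hv4, g, -, -, -⟩ := pick G G G G eG eG eG eG D4 (z4.trans x4)
    D5 (z5.trans x5) D5 (z5.trans x5) D5 (z5.trans x5) D5 (z5.trans x5)
    (d45.mono z4 z5) (d45.mono z4 z5) (d45.mono z4 z5) (d45.mono z4 z5)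
    (by linarith) (by linarith) (by linarith) (by linarith) (by linarith)
  have hpos : (0:ℝ) < (nb G v4 D5).card := lt_of_le_of_lt
    (div_nonneg (Nat.cast_nonneg _) (by norm_num)) g
  obtain ⟨v5, hv5⟩ := Finset.card_pos.1 (by exact_mod_cast hpos)
  obtain ⟨f1, f45⟩ := mem_nb.1 hv5
  obtain ⟨f2, f35⟩ := mem_nb.1 f1
  obtain ⟨f3, f25⟩ := mem_nb.1 f2
  obtain ⟨-, f15⟩ := mem_nb.1 f3
  obtain ⟨f4, f34⟩ := mem_nb.1 hv4
  obtain ⟨f5, f24⟩ := mem_nb.1 f4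
  obtain ⟨-, f14⟩ := mem_nb.1 f5
  obtain ⟨f6, f23⟩ := mem_nb.1 hv3
  obtain ⟨-, f13⟩ := mem_nb.1 f6
  obtain ⟨-, f12⟩ := mem_nb.1 hv2
  rw [SimpleGraph.compl_adj] at f35 f25 f24 f14 f13
  exact hG v1 v2 v3 v4 v5 f12 f23 f34 f45 f15.symm f13.2 f14.2 f24.2 f25.2 f35.2

theorem sum_nb_comm {V : Type} (G : SimpleGraph V) (B C : Finset V) :
    ∑ q ∈ C, ((nb G q B).card : ℝ) = ∑ b ∈ B, ((nb G b C).card : ℝ) := by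
  simp only [nb, Finset.card_filter]
  push_cast
  rw [Finset.sum_comm]
  exact Finset.sum_congr rfl fun b _ => Finset.sum_congr rfl fun q _ =>
    if_congr (G.adj_comm q b) rfl rfl

theorem triple_false {V : Type} {G : SimpleGraph V} (hG : NoC5 G) {c β m : ℝ} (hc : 0 < c)
    (hc2 : c ≤ 1 / 2) (hα : 1 ≤ c * β) (hm : 32 * β ≤ m)
    (hE : ∀ A B : Finset V, Disjoint A B → c * β ≤ A.card → β ≤ B.card →
      ∃ a ∈ A, c * B.card < ((nb G a B).card : ℝ))
    {P B C : Finset V} (hBC : Disjoint B C) (hPB : Disjoint P B) (hPC : Disjoint P C)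
    (mP : m ≤ P.card) (mB : m ≤ B.card) (mC : m ≤ C.card)
    (h1 : ∀ a ∈ P, ((nb G a B).card : ℝ) ≤ B.card / 64)
    (h2 : ∀ a ∈ P, ((nb G a C).card : ℝ) ≤ C.card / 64)
    (h3 : ∀ a ∈ B, ((nb G a C).card : ℝ) ≤ C.card / 64) : False := by
  have hβ : 0 < β := by
    by_contra h
    push Not at h
    nlinarith
  have hcβ : c * β ≤ β / 2 := by nlinarith
  set C' := C.filter (fun q => ((nb G q B).card : ℝ) ≤ B.card / 32) with hC'
  set F := C.filter (fun q => ¬ ((nb G q B).card : ℝ) ≤ B.card / 32) with hF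
  have hcard : (C'.card : ℝ) + F.card = C.card := by
    exact_mod_cast Finset.card_filter_add_card_filter_not (s := C)
      (fun q => ((nb G q B).card : ℝ) ≤ B.card / 32)
  have hBpos : (0:ℝ) < B.card := by linarith
  have e1 : (F.card : ℝ) * (B.card / 32) ≤ B.card * (C.card / 64) := by
    calc (F.card : ℝ) * (B.card / 32) = ∑ q ∈ F, (B.card / 32 : ℝ) := by simp
      _ ≤ ∑ q ∈ F, ((nb G q B).card : ℝ) :=
        Finset.sum_le_sum fun q hq => (not_le.1 (Finset.mem_filter.1 hq).2).le
      _ ≤ ∑ q ∈ C, ((nb G q B).card : ℝ) :=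
        Finset.sum_le_sum_of_subset_of_nonneg (Finset.filter_subset _ _)
          fun _ _ _ => by positivity
      _ = ∑ b ∈ B, ((nb G b C).card : ℝ) := sum_nb_comm G B C
      _ ≤ ∑ b ∈ B, (C.card / 64 : ℝ) := Finset.sum_le_sum h3
      _ = _ := by simp
  have e2 : (F.card : ℝ) ≤ C.card / 2 := by
    by_contra h
    push Not at h
    nlinarith
  have e3 : (C.card : ℝ) / 2 ≤ C'.card := by linarith
  have hsub : C' ⊆ C := Finset.filter_subset _ _
  have hnb : ∀ a, ((nb G a C').card : ℝ) ≤ (nb G a C).card := by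
    intro a
    exact_mod_cast Finset.card_le_card (Finset.filter_subset_filter _ hsub)
  exact sparse_case hG hc hβ hα hE (hBC.mono_right hsub) hPB (hPC.mono_right hsub)
    (fun a ha => by linarith [h1 a ha]) (fun a ha => by linarith [h2 a ha, hnb a])
    (fun a ha => by linarith [h3 a ha, hnb a]) (fun a ha => (Finset.mem_filter.1 ha).2)
    (by linarith) (by linarith) (by nlinarith) (by nlinarith) (by linarith) (by nlinarith)

theorem compl_nb_card {V : Type} (G : SimpleGraph V) (v : V) (S : Finset V) (hv : v ∉ S) :
    (nb G v S).card + (nb Gᶜ v S).card = S.card := by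
  have h : nb Gᶜ v S = S.filter (fun x => ¬ G.Adj v x) := by
    ext x
    rw [mem_nb, Finset.mem_filter, SimpleGraph.compl_adj]
    constructor
    · exact fun h => ⟨h.1, h.2.2⟩
    · exact fun h => ⟨h.1, fun e => hv (e ▸ h.1), h.2⟩
  rw [h]
  exact Finset.card_filter_add_card_filter_not (s := S) (fun x => G.Adj v x)

set_option maxHeartbeats 4000000 in
/-- There exists `ε > 0` such that for every `0 ≤ c ≤ 1/2` and every `C₅`-free graph `G`
on `n > 1` vertices there are disjoint nonempty `A, B ⊆ V(G)` with `|A| ≥ εcn`, `|B| ≥ εn`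
whose edge-density is at most `c` or at least `1 - c`. -/
theorem c5_free_density_theorem :
    ∃ ε : ℝ, 0 < ε ∧
      ∀ (c : ℝ), 0 ≤ c → c ≤ 1 / 2 →
        ∀ (n : ℕ) (G : SimpleGraph (Fin n)), 1 < n → C5Free G →
          ∃ A B : Finset (Fin n), Disjoint A B ∧ A.Nonempty ∧ B.Nonempty ∧
            ε * c * n ≤ (A.card : ℝ) ∧ ε * n ≤ (B.card : ℝ) ∧
            ((G.edgeDensity A B : ℝ) ≤ c ∨ 1 - c ≤ (G.edgeDensity A B : ℝ)) := by
  obtain ⟨δ, hδ⟩ : ∃ δ : ℝ, δ = 1 / (40 * 64 ^ 4) := ⟨_, rfl⟩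
  have hδ0 : 0 < δ := by rw [hδ]; norm_num
  have hδ1 : δ ≤ 1 / 40 := by rw [hδ]; norm_num
  have hδ3 : δ ^ 3 ≤ δ ^ 2 := 
    pow_le_pow_of_le_one hδ0.le (by linarith) (by norm_num)
  have hδ2 : δ ^ 2 ≤ δ := by nlinarith
  refine ⟨δ ^ 3 / 32, by positivity, ?_⟩
  intro c hc0 hc2 n G hn hfree
  have hG := noC5_of_free hfree
  have hnR : (2:ℝ) ≤ n := by exact_mod_cast hn
  obtain ⟨β, hβ⟩ : ∃ β : ℝ, β = δ ^ 3 / 32 * n := ⟨_, rfl⟩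
  have hα : δ ^ 3 / 32 * c * n = c * β := by rw [hβ]; ring
  rw [hα, ← hβ]
  have hβ0 : 0 < β := by rw [hβ]; positivity
  by_cases hsmall : c * β < 1
  · -- a single vertex suffices
    let v : Fin n := ⟨0, by omega⟩
    have hsum := compl_nb_card G v (Finset.univ \ {v}) (by simp)
    have hcu : (Finset.univ \ {v} : Finset (Fin n)).card = n - 1 := by
      rw [Finset.card_sdiff_of_subset (Finset.subset_univ _)]
      simp
    rw [hcu] at hsum
    have hbig : ∀ B : Finset (Fin n), n - 1 ≤ 2 * B.card → β ≤ B.card ∧ B.Nonempty := by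
      intro B hB
      have h4 : (n:ℝ) ≤ 4 * B.card := by exact_mod_cast (by omega : n ≤ 4 * B.card)
      have hb : β ≤ B.card := by
        have : β ≤ 1 / 4 * n := by
          rw [hβ]
          apply mul_le_mul_of_nonneg_right _ (by positivity)
          linarith
        linarith
      exact ⟨hb, Finset.card_pos.1 (by omega)⟩
    have hone : c * β ≤ (({v} : Finset (Fin n)).card : ℝ) := by simp; linarith
    rcases le_total (nb G v (Finset.univ \ {v})).card (nb Gᶜ v (Finset.univ \ {v})).card with h | h
    · obtain ⟨hb, hne⟩ := hbig (nb Gᶜ v (Finset.univ \ {v})) (by omega)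
      refine ⟨{v}, _, ?_, by simp, hne, hone, hb, Or.inl ?_⟩
      · simp [mem_nb]
      · apply density_le (by simp) hne
        intro a ha
        rw [Finset.mem_singleton] at ha
        subst ha
        have : nb G v (nb Gᶜ v (Finset.univ \ {v})) = ∅ := by
          ext x
          simp only [mem_nb, SimpleGraph.compl_adj]
          simp
          try tauto
        rw [this]
        simp only [Finset.card_empty, Nat.cast_zero]
        positivity
    · obtain ⟨hb, hne⟩ := hbig (nb G v (Finset.univ \ {v})) (by omega)
      have hdis : Disjoint {v} (nb G v (Finset.univ \ {v})) := by simp [mem_nb]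
      refine ⟨{v}, _, hdis, by simp, hne, hone, hb, Or.inr ?_⟩
      · apply density_ge (by simp) hne hdis
        intro a ha
        rw [Finset.mem_singleton] at ha
        subst ha
        have : nb Gᶜ v (nb G v (Finset.univ \ {v})) = ∅ := by
          ext x
          simp only [mem_nb, SimpleGraph.compl_adj]
          simp
          try tauto
        rw [this]
        simp only [Finset.card_empty, Nat.cast_zero]
        positivity
  push Not at hsmall
  have hc : 0 < c := by
    rcases hc0.lt_or_eq with h | h
    · exact h
    · rw [← h] at hsmall; linarith
  by_contra hno
  have hE : ∀ H : SimpleGraph (Fin n), (H = G ∨ H = Gᶜ) → ∀ A B : Finset (Fin n), Disjoint A B →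
      c * β ≤ A.card → β ≤ B.card → ∃ a ∈ A, c * B.card < ((nb H a B).card : ℝ) := by
    intro H hH A B hd hA hB
    by_contra hcon
    push Not at hcon
    have nA : A.Nonempty := Finset.card_pos.1 (by
      have : (0:ℝ) < A.card := by linarith
      exact_mod_cast this)
    have nB : B.Nonempty := Finset.card_pos.1 (by
      have : (0:ℝ) < B.card := by linarith
      exact_mod_cast this)
    apply hno
    refine ⟨A, B, hd, nA, nB, hA, hB, ?_⟩
    rcases hH with rfl | rfl
    · exact Or.inl (density_le nA nB hcon)
    · exact Or.inr (density_ge nA nB hd hcon)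
  have hH5 : ∀ H : SimpleGraph (Fin n), (H = G ∨ H = Gᶜ) → NoC5 H := by
    rintro H (rfl | rfl)
    · exact hG
    · exact noC5_compl hG
  have hβ2 : 2 ≤ β := by nlinarith
  have hnbig : 64 ≤ δ ^ 3 * n := by
    have : δ ^ 3 * n = 32 * β := by rw [hβ]; ring
    linarith
  have pair : ∀ X : Finset (Fin n), 5 ≤ (X.card : ℝ) → ∃ A ⊆ X, ∃ B ⊆ X, Disjoint A B ∧
      δ * X.card ≤ A.card ∧ δ * X.card ≤ B.card ∧
      ∃ H : SimpleGraph (Fin n), (H = G ∨ H = Gᶜ) ∧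
        ∀ a ∈ A, ((nb H a B).card : ℝ) ≤ B.card / 64 := by
    intro X hX
    obtain ⟨A, hA, B, hB, hd, h1, h2, h3⟩ := eh_pair hG X (by exact_mod_cast hX)
    have e : δ * X.card = X.card / (40 * 64 ^ 4) := by rw [hδ]; ring
    exact ⟨A, hA, B, hB, hd, e ▸ h1, e ▸ h2, h3⟩
  have hn32 : δ ^ 3 * n ≤ δ ^ 2 * n := mul_le_mul_of_nonneg_right hδ3 (by positivity)
  have hn21 : δ ^ 2 * n ≤ δ * n := mul_le_mul_of_nonneg_right hδ2 (by positivity)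
  have hn10 : δ * n ≤ n := by nlinarith
  obtain ⟨A0, -, B0, -, d0, a0, b0, H0, e0, s0⟩ := pair Finset.univ
    (by rw [Finset.card_univ, Fintype.card_fin]; linarith)
  simp only [Finset.card_univ, Fintype.card_fin] at a0 b0
  obtain ⟨A1, A1s, B1, B1s, d1, a1, b1, H1, e1, s1⟩ := pair A0 (by linarith)
  have k1 : δ ^ 2 * n ≤ δ * A0.card := by nlinarith
  obtain ⟨A2, A2s, B2, B2s, d2, a2, b2, H2, e2, s2⟩ := pair A1 (by linarith)
  have k2 : δ ^ 3 * n ≤ δ * A1.card := by nlinarith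
  have hm : 32 * β ≤ δ ^ 3 * n := by rw [hβ]; apply le_of_eq; ring
  have fin01 : H0 ≠ H1 := by
    rintro rfl
    exact triple_false (hH5 H0 e0) hc hc2 hsmall hm (hE H0 e0) (P := A2) (B := B1) (C := B0)
      (d0.mono_left B1s) (d1.mono_left A2s) (d0.mono_left (A2s.trans A1s))
      (by linarith) (by linarith) (by linarith)
      (fun a ha => s1 a (A2s ha)) (fun a ha => s0 a (A1s (A2s ha))) (fun a ha => s0 a (B1s ha))
  have fin02 : H0 ≠ H2 := by
    rintro rfl
    exact triple_false (hH5 H0 e0) hc hc2 hsmall hm (hE H0 e0) (P := A2) (B := B2) (C := B0)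
      (d0.mono_left (B2s.trans A1s)) d2 (d0.mono_left (A2s.trans A1s))
      (by linarith) (by linarith) (by linarith)
      (fun a ha => s2 a ha) (fun a ha => s0 a (A1s (A2s ha))) (fun a ha => s0 a (A1s (B2s ha)))
  have fin12 : H1 ≠ H2 := by
    rintro rfl
    exact triple_false (hH5 H1 e1) hc hc2 hsmall hm (hE H1 e1) (P := A2) (B := B2) (C := B1)
      (d1.mono_left B2s) d2 (d1.mono_left A2s)
      (by linarith) (by linarith) (by linarith)
      (fun a ha => s2 a ha) (fun a ha => s1 a (A2s ha)) (fun a ha => s1 a (B2s ha))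
  rcases e0 with h0 | h0 <;> rcases e1 with h1 | h1 <;> rcases e2 with h2 | h2 <;>
    first
    | exact fin01 (h0.trans h1.symm)
    | exact fin02 (h0.trans h2.symm)
    | exact fin12 (h1.trans h2.symm)
end

section
/- For every graph H with h vertices and every real d with 0 < d ≤ 1/2, setting δ = 2^{−15·h·(log(1/d))²}, every H-free graph G contains a subset X ⊆ V(G) with |X| ≥ δ·|V(G)| such that in one of the induced subgraph G[X] or the induced subgraph of the complement graph of G on X, every vertex has degree at most d·|X|. -/
open SimpleGraph
open scoped Classical

namespace RodlQ

variable {V : Type*} [Fintype V]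

/-- bilinear form of a real kernel -/
noncomputable def Q (M : V → V → ℝ) (x y : V → ℝ) : ℝ := ∑ u, ∑ v, M u v * x u * y v

lemma Q_add_left (M : V → V → ℝ) (x x' y : V → ℝ) :
    Q M (fun u => x u + x' u) y = Q M x y + Q M x' y := by
  simp only [Q, ← Finset.sum_add_distrib]
  refine Finset.sum_congr rfl fun u _ => Finset.sum_congr rfl fun v _ => by ring

lemma Q_add_right (M : V → V → ℝ) (x y y' : V → ℝ) :
    Q M x (fun u => y u + y' u) = Q M x y + Q M x y' := by
  simp only [Q, ← Finset.sum_add_distrib]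
  refine Finset.sum_congr rfl fun u _ => Finset.sum_congr rfl fun v _ => by ring

lemma Q_smul_left (M : V → V → ℝ) (c : ℝ) (x y : V → ℝ) :
    Q M (fun u => c * x u) y = c * Q M x y := by
  simp only [Q, Finset.mul_sum]
  refine Finset.sum_congr rfl fun u _ => Finset.sum_congr rfl fun v _ => by ring

lemma Q_smul_right (M : V → V → ℝ) (c : ℝ) (x y : V → ℝ) :
    Q M x (fun u => c * y u) = c * Q M x y := by
  simp only [Q, Finset.mul_sum]
  refine Finset.sum_congr rfl fun u _ => Finset.sum_congr rfl fun v _ => by ring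

lemma Q_symm (M : V → V → ℝ) (hM : ∀ u v, M u v = M v u) (x y : V → ℝ) :
    Q M x y = Q M y x := by
  simp only [Q]
  rw [Finset.sum_comm]
  refine Finset.sum_congr rfl fun u _ => Finset.sum_congr rfl fun v _ => by rw [hM]; ring

/-- adjacency kernel -/
noncomputable def adj (G : SimpleGraph V) (u v : V) : ℝ := if G.Adj u v then 1 else 0

lemma adj_symm (G : SimpleGraph V) (u v : V) : adj G u v = adj G v u := by
  simp [adj, G.adj_comm]

lemma adj_nonneg (G : SimpleGraph V) (u v : V) : 0 ≤ adj G u v := by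
  unfold adj; split_ifs <;> norm_num

lemma sum_adj (G : SimpleGraph V) (u : V) (B : Finset V) :
    ∑ b ∈ B, adj G u b = ((B.filter (fun b => G.Adj u b)).card : ℝ) := by
  simp [adj]

/-- fractional sparse set of size `s` inside `U` -/
def Good (G : SimpleGraph V) (ρ : ℝ) (U : Finset V) (s : ℝ) : Prop :=
  ∃ μ : V → ℝ, (∀ v, 0 ≤ μ v) ∧ (∀ v, μ v * s ≤ 1) ∧ (∀ v, v ∉ U → μ v = 0) ∧
    ∑ v, μ v = 1 ∧ Q (adj G) μ μ ≤ ρ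

lemma Good.mono {G : SimpleGraph V} {ρ : ℝ} {U U' : Finset V} {s s' : ℝ}
    (h : Good G ρ U s) (hU : U ⊆ U') (hs : s' ≤ s) : Good G ρ U' s' := by
  obtain ⟨μ, h0, h1, h2, h3, h4⟩ := h
  exact ⟨μ, h0, fun v => (mul_le_mul_of_nonneg_left hs (h0 v)).trans (h1 v),
    fun v hv => h2 v fun h => hv (hU h), h3, h4⟩

/-- The pair lemma. -/
def SparsePair (G : SimpleGraph V) (ε : ℝ) (A B : Finset V) : Prop :=
  ∀ v ∈ A, ((B.filter (fun u => G.Adj v u)).card : ℝ) ≤ ε * B.card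

lemma pair_aux (G : SimpleGraph V) (ε : ℝ) (hε0 : 0 < ε) (hε : ε ≤ 1 / 2) (U : Finset V) (h : ℕ) :
    ∀ (H : SimpleGraph (Fin h)) (s : ℝ), 0 < s → ∀ C : Fin h → Finset V,
      (∀ i, C i ⊆ U) → (∀ i, s ≤ (C i).card) →
      (∃ f : Fin h → V, (∀ i, f i ∈ C i) ∧
        ∀ i j, i ≠ j → f i ≠ f j ∧ (H.Adj i j ↔ G.Adj (f i) (f j))) ∨
      ∃ A B : Finset V, A ⊆ U ∧ B ⊆ U ∧ ε ^ h * s ≤ A.card ∧ 2 * (ε ^ h * s) ≤ B.card ∧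
        (SparsePair G ε A B ∨ SparsePair Gᶜ ε A B) := by
  induction h with
  | zero => 
    intro H s hs C _ _
    exact Or.inl ⟨fun i => i.elim0, fun i => i.elim0, fun i => i.elim0⟩
  | succ h ih =>
    intro H s hs C hCU hCs
    let R : Fin h → SimpleGraph V := fun i => if H.Adj 0 i.succ then G else Gᶜ
    let D : V → Fin h → Finset V := fun v i => (C i.succ).filter (fun u => (R i).Adj v u)
    by_cases hgood : ∃ v ∈ C 0, ∀ i : Fin h, ε * (C i.succ).card ≤ ((D v i).card : ℝ)
    · obtain ⟨v, hv, hvi⟩ := hgood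
      have := ih (H.comap Fin.succ) (ε * s) (by positivity) (D v)
        (fun i => (Finset.filter_subset _ _).trans (hCU _))
        (fun i => (mul_le_mul_of_nonneg_left (hCs _) hε0.le).trans (hvi i))
      rcases this with ⟨f, hf, hf2⟩ | ⟨A, B, hA, hB, hA1, hB1, hAB⟩
      · left
        have key : ∀ i : Fin h, v ≠ f i ∧ (H.Adj 0 i.succ ↔ G.Adj v (f i)) := by
          intro i
          have h1 := (Finset.mem_filter.1 (hf i)).2
          refine ⟨h1.ne, ?_⟩
          by_cases hH : H.Adj 0 i.succ
          · simp only [R, hH, if_true] at h1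
            simp [hH, h1]
          · simp only [R, hH, if_false, SimpleGraph.compl_adj] at h1
            simp [hH, h1.2]
        refine ⟨Fin.cons v f, ?_, ?_⟩
        · intro i
          refine Fin.cases ?_ (fun i => ?_) i
          · simpa using hv
          · simpa using (Finset.mem_filter.1 (hf i)).1
        · intro i j
          refine Fin.cases ?_ (fun i => ?_) i <;> refine Fin.cases ?_ (fun j => ?_) j
          · intro hne; exact absurd rfl hne
          · intro _; simpa using key j
          · intro _
            have := key i
            simp only [Fin.cons_succ, Fin.cons_zero]
            exact ⟨this.1.symm, by rw [H.adj_comm, this.2, G.adj_comm]⟩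
          · intro hne
            have := hf2 i j (fun e => hne (by rw [e]))
            simpa using this
      · right
        refine ⟨A, B, hA, hB, ?_, ?_, hAB⟩
        · rw [pow_succ, mul_assoc]; exact hA1
        · rw [pow_succ, mul_assoc]; exact hB1
    · right
      push Not at hgood
      let A : Fin h → Finset V := fun i =>
        (C 0).filter (fun v => ((D v i).card : ℝ) < ε * (C i.succ).card)
      have hcov : C 0 ⊆ Finset.univ.biUnion A := by
        intro v hv
        obtain ⟨i, hi⟩ := hgood v hv
        simp only [Finset.mem_biUnion, Finset.mem_univ, true_and, A, Finset.mem_filter]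
        exact ⟨i, hv, hi⟩
      have hcard : ((C 0).card : ℝ) ≤ ∑ i, ((A i).card : ℝ) := by
        exact_mod_cast (Finset.card_le_card hcov).trans Finset.card_biUnion_le
      have hex : ∃ i, ε ^ (h+1) * s ≤ (A i).card := by
        by_contra hcon
        push Not at hcon
        have h1 : ∑ i, ((A i).card : ℝ) ≤ ∑ i : Fin h, ε ^ (h+1) * s :=
          Finset.sum_le_sum fun i _ => (hcon i).le
        simp only [Finset.sum_const, Finset.card_univ, Fintype.card_fin, nsmul_eq_mul] at h1
        have h2 : (h:ℝ) * ε ^ (h+1) < 1 := by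
          have : ε ^ (h+1) ≤ (1/2) ^ (h+1) := pow_le_pow_left₀ hε0.le hε _
          have h3 : (h:ℝ) < 2 ^ (h+1) := by
            exact_mod_cast (Nat.lt_succ_self h).trans (Nat.lt_two_pow_self)
          calc (h:ℝ) * ε ^ (h+1) ≤ h * (1/2)^(h+1) := by gcongr
            _ < 2 ^ (h+1) * (1/2)^(h+1) := by gcongr
            _ = 1 := by rw [← mul_pow]; norm_num
        have h4 := hCs 0
        nlinarith
      obtain ⟨i, hi⟩ := hex
      refine ⟨A i, C i.succ, (Finset.filter_subset _ _).trans (hCU _), hCU _, hi, ?_, ?_⟩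
      · have : ε ^ (h+1) ≤ 1/2 := by
          rw [pow_succ]
          have : ε ^ h ≤ 1 := pow_le_one₀ hε0.le (by linarith)
          nlinarith
        have := hCs i.succ
        nlinarith
      · have : SparsePair (R i) ε (A i) (C i.succ) := by
          intro v hv
          exact (Finset.mem_filter.1 hv).2.le
        by_cases hH : H.Adj 0 i.succ
        · left; simpa only [R, hH, if_true] using this
        · right; simpa only [R, hH, if_false] using this

lemma pair_lemma (G : SimpleGraph V) (ε : ℝ) (hε0 : 0 < ε) (hε : ε ≤ 1 / 2) {h : ℕ}
    (H : SimpleGraph (Fin h)) (hH : ¬ Nonempty (H ↪g G)) (U : Finset V) (hU : U.Nonempty) :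
    ∃ A B : Finset V, A ⊆ U ∧ B ⊆ U ∧ ε ^ h * U.card ≤ A.card ∧ 2 * (ε ^ h * U.card) ≤ B.card ∧
        (SparsePair G ε A B ∨ SparsePair Gᶜ ε A B) := by
  have hpos : (0:ℝ) < U.card := by exact_mod_cast hU.card_pos
  rcases pair_aux G ε hε0 hε U h H U.card hpos (fun _ => U) (fun _ => subset_rfl)
    (fun _ => le_rfl) with ⟨f, -, hf⟩ | h1
  · exfalso
    apply hH
    have hinj : Function.Injective f := fun i j hij => by
      by_contra hne
      exact (hf i j hne).1 hij
    refine ⟨⟨⟨f, hinj⟩, ?_⟩⟩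
    intro i j
    by_cases hij : i = j
    · subst hij; simp
    · exact (hf i j hij).2.symm
  · exact h1

lemma half_good (G : SimpleGraph V) (ε : ℝ) (hε0 : 0 < ε) (A B : Finset V)
    (hAB : SparsePair G ε A B) (μ : V → ℝ) (h0 : ∀ v, 0 ≤ μ v) (h2 : ∀ v, v ∉ A → μ v = 0)
    (h3 : ∑ v, μ v = 1) :
    (B.card : ℝ) ≤ 2 * (B.filter (fun b => ∑ u, μ u * adj G u b ≤ 2 * ε)).card := by
  have e1 : ∑ b ∈ B, ∑ u, μ u * adj G u b ≤ ε * B.card := by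
    rw [Finset.sum_comm]
    calc ∑ u, ∑ b ∈ B, μ u * adj G u b ≤ ∑ u, μ u * (ε * B.card) := by
          refine Finset.sum_le_sum fun u _ => ?_
          rw [← Finset.mul_sum, sum_adj]
          by_cases hu : u ∈ A
          · exact mul_le_mul_of_nonneg_left (hAB u hu) (h0 u)
          · simp [h2 u hu]
      _ = ε * B.card := by rw [← Finset.sum_mul, h3, one_mul]
  have e2 : 2 * ε * (B.filter (fun b => ¬ ∑ u, μ u * adj G u b ≤ 2 * ε)).card ≤
      ∑ b ∈ B, ∑ u, μ u * adj G u b := by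
    calc 2 * ε * (B.filter (fun b => ¬ ∑ u, μ u * adj G u b ≤ 2 * ε)).card
        = ∑ b ∈ B.filter (fun b => ¬ ∑ u, μ u * adj G u b ≤ 2 * ε), 2 * ε := by
          simp only [Finset.sum_const, nsmul_eq_mul]; ring
      _ ≤ ∑ b ∈ B.filter (fun b => ¬ ∑ u, μ u * adj G u b ≤ 2 * ε), ∑ u, μ u * adj G u b := by
          refine Finset.sum_le_sum fun b hb => ?_
          exact (not_le.1 (Finset.mem_filter.1 hb).2).le
      _ ≤ _ := by
          refine Finset.sum_le_sum_of_subset_of_nonneg (Finset.filter_subset _ _) fun b _ _ => ?_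
          exact Finset.sum_nonneg fun u _ => mul_nonneg (h0 u) (adj_nonneg _ _ _)
  have e3 : ((B.filter (fun b => ∑ u, μ u * adj G u b ≤ 2 * ε)).card : ℝ) +
      (B.filter (fun b => ¬ ∑ u, μ u * adj G u b ≤ 2 * ε)).card = B.card := by
    exact_mod_cast Finset.card_filter_add_card_filter_not _
  nlinarith

lemma step (G G' : SimpleGraph V) (ε c ρ ρ' : ℝ) (hε0 : 0 < ε) (hc : 0 < c) (hερ : 4 * ε ≤ ρ)
    (U A B : Finset V) (hU : U.Nonempty) (hAU : A ⊆ U) (hBU : B ⊆ U) (k : ℝ) (hk : 0 < k)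
    (hA : k * U.card ≤ A.card) (hB : 2 * (k * U.card) ≤ B.card)
    (hAB : SparsePair G ε A B)
    (ih : ∀ W : Finset V, W.Nonempty →
      Good G (3 / 2 * ρ) W (c * W.card) ∨ Good G' ρ' W (c * W.card)) :
    Good G ρ U (c * k * U.card) ∨ Good G' ρ' U (c * k * U.card) := by
  have hpos : (0:ℝ) < U.card := by exact_mod_cast hU.card_pos
  have hkU : 0 < k * U.card := by positivity
  have hAne : A.Nonempty := by
    rw [← Finset.card_pos]; exact_mod_cast hkU.trans_le hA
  have big : ∀ W : Finset V, k * U.card ≤ W.card → c * k * U.card ≤ c * W.card := by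
    intro W hW; rw [mul_assoc]; gcongr
  rcases ih A hAne with hg | hg
  swap
  · exact Or.inr (hg.mono hAU (big A hA))
  replace hg := hg.mono subset_rfl (big A hA)
  obtain ⟨μ, h0, h1, h2, h3, h4⟩ := hg
  have hhalf := half_good G ε hε0 A B hAB μ h0 h2 h3
  set B' := B.filter (fun b => ∑ u, μ u * adj G u b ≤ 2 * ε) with hB'
  have hB'c : k * U.card ≤ B'.card := by linarith
  have hB'ne : B'.Nonempty := by
    rw [← Finset.card_pos]; exact_mod_cast hkU.trans_le hB'c
  have hB'U : B' ⊆ U := (Finset.filter_subset _ _).trans hBU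
  rcases ih B' hB'ne with hg | hg
  swap
  · exact Or.inr (hg.mono hB'U (big B' hB'c))
  replace hg := hg.mono subset_rfl (big B' hB'c)
  obtain ⟨ν, k0, k1, k2, k3, k4⟩ := hg
  left
  have hcross : Q (adj G) μ ν ≤ 2 * ε := by
    unfold Q
    rw [Finset.sum_comm]
    calc ∑ b, ∑ u, adj G u b * μ u * ν b ≤ ∑ b, ν b * (2 * ε) := by
          refine Finset.sum_le_sum fun b _ => ?_
          by_cases hb : b ∈ B'
          · have := mul_le_mul_of_nonneg_left (Finset.mem_filter.1 hb).2 (k0 b)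
            refine le_trans (le_of_eq ?_) this
            rw [Finset.mul_sum]
            exact Finset.sum_congr rfl fun u _ => by ring
          · simp [k2 b hb]
      _ = 2 * ε := by rw [← Finset.sum_mul, k3, one_mul]
  refine ⟨fun v => 1/2 * (μ v + ν v), ?_, ?_, ?_, ?_, ?_⟩
  · intro v; have := h0 v; have := k0 v; positivity
  · intro v
    have := h1 v; have := k1 v
    dsimp only
    linarith
  · intro v hv
    simp [h2 v (fun h => hv (hAU h)), k2 v (fun h => hv (hB'U h))]
  · rw [← Finset.mul_sum, Finset.sum_add_distrib, h3, k3]; norm_num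
  · rw [Q_smul_left, Q_smul_right, Q_add_left, Q_add_right, Q_add_right,
      Q_symm _ (adj_symm G) ν μ]
    linarith

lemma base (G : SimpleGraph V) (ρ ρ' : ℝ) (hρ : 1 ≤ ρ + ρ') (U : Finset V) (hU : U.Nonempty) :
    Good G ρ U U.card ∨ Good Gᶜ ρ' U U.card := by
  have hpos : (0:ℝ) < U.card := by exact_mod_cast hU.card_pos
  let μ : V → ℝ := fun v => if v ∈ U then (U.card : ℝ)⁻¹ else 0
  have h0 : ∀ v, 0 ≤ μ v := by
    intro v; simp only [μ]; split_ifs <;> positivity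
  have h1 : ∀ v, μ v * U.card ≤ 1 := by
    intro v; simp only [μ]; split_ifs
    · rw [inv_mul_cancel₀ hpos.ne']
    · simp
  have h2 : ∀ v, v ∉ U → μ v = 0 := by
    intro v hv; simp [μ, hv]
  have h3 : ∑ v, μ v = 1 := by
    simp only [μ, Finset.sum_ite_mem, Finset.univ_inter, Finset.sum_const, nsmul_eq_mul]
    exact mul_inv_cancel₀ hpos.ne'
  have h4 : Q (adj G) μ μ + Q (adj Gᶜ) μ μ ≤ 1 := by
    have : (1:ℝ) = ∑ u, ∑ v, μ u * μ v := by
      rw [← Finset.sum_mul_sum, h3, one_mul]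
    rw [this]
    simp only [Q, ← Finset.sum_add_distrib]
    refine Finset.sum_le_sum fun u _ => Finset.sum_le_sum fun v _ => ?_
    have : adj G u v + adj Gᶜ u v ≤ 1 := by
      by_cases h : G.Adj u v
      · simp [adj, h]
      · simp only [adj, h, if_false, zero_add]; split_ifs <;> norm_num
    have := mul_le_mul_of_nonneg_right this (mul_nonneg (h0 u) (h0 v))
    linarith
  by_cases hq : Q (adj G) μ μ ≤ ρ
  · exact Or.inl ⟨μ, h0, h1, h2, h3, hq⟩
  · exact Or.inr ⟨μ, h0, h1, h2, h3, by linarith⟩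

lemma main_ind (G : SimpleGraph V) (ε : ℝ) (hε0 : 0 < ε) (hε : ε ≤ 1 / 2) {h : ℕ}
    (H : SimpleGraph (Fin h)) (hH : ¬ Nonempty (H ↪g G)) (t : ℕ) :
    ∀ ρ ρ' : ℝ, 4 * ε ≤ ρ → 4 * ε ≤ ρ' → 1 / 4 ≤ ρ * ρ' * (3 / 2) ^ t →
    ∀ U : Finset V, U.Nonempty →
      Good G ρ U ((ε ^ h) ^ t * U.card) ∨ Good Gᶜ ρ' U ((ε ^ h) ^ t * U.card) := by
  induction t with
  | zero =>
    intro ρ ρ' h1 h2 h3 U hU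
    simp only [pow_zero, one_mul, mul_one] at h3 ⊢
    exact base G ρ ρ' (by nlinarith [sq_nonneg (ρ - ρ')]) U hU
  | succ t ih =>
    intro ρ ρ' h1 h2 h3 U hU
    obtain ⟨A, B, hA, hB, hA1, hB1, hAB⟩ := pair_lemma G ε hε0 hε H hH U hU
    rw [pow_succ (ε ^ h) t]
    rw [pow_succ] at h3
    rcases hAB with hAB | hAB
    · exact step G Gᶜ ε _ ρ ρ' hε0 (by positivity) h1 U A B hU hA hB _ (by positivity) hA1 hB1 hAB
        (ih (3/2 * ρ) ρ' (by linarith) h2 (by linarith))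
    · exact (step Gᶜ G ε _ ρ' ρ hε0 (by positivity) h2 U A B hU hA hB _ (by positivity) hA1 hB1 hAB
        (fun W hW => (ih ρ (3/2 * ρ') h1 (by linarith) (by linarith) W hW).symm)).symm

lemma Q_line (M : V → V → ℝ) (t : ℝ) (w e : V → ℝ) :
    Q M (fun u => w u + t * e u) (fun u => w u + t * e u) =
      Q M w w + t * (Q M w e + Q M e w) + t ^ 2 * Q M e e := by
  rw [Q_add_left, Q_add_right, Q_add_right, Q_smul_left, Q_smul_left, Q_smul_right, Q_smul_right]
  ring

/-- indicator -/
noncomputable def ind (Y : Finset V) : V → ℝ := fun v => if v ∈ Y then 1 else 0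

lemma Q_single (M : V → V → ℝ) (v : V) : Q M (ind {v}) (ind {v}) = M v v := by
  simp [Q, ind]

lemma round (M : V → V → ℝ) (hM : ∀ v, 0 ≤ M v v) (w : V → ℝ) (h0 : ∀ v, 0 ≤ w v)
    (h1 : ∀ v, w v ≤ 1) : ∃ Y : Finset V, Q M w w ≤ Q M (ind Y) (ind Y) := by
  have key : ∀ S : Finset V, ∃ x : V → ℝ, (∀ v, 0 ≤ x v) ∧ (∀ v, x v ≤ 1) ∧
      (∀ v ∈ S, x v = 0 ∨ x v = 1) ∧ Q M w w ≤ Q M x x := by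
    intro S
    induction S using Finset.induction_on with
    | empty => exact ⟨w, h0, h1, by simp, le_rfl⟩
    | insert a S ha ih =>
      obtain ⟨x, x0, x1, xS, xQ⟩ := ih
      let y : V → ℝ := fun v => if v = a then 0 else x v
      have hx : x = fun u => y u + x a * ind {a} u := by
        funext u
        by_cases hu : u = a
        · subst hu; simp [y, ind]
        · simp [y, ind, hu]
      have hq := Q_line M (x a) y (ind {a})
      rw [← hx, Q_single] at hq
      have hq1 := Q_line M 1 y (ind {a})
      rw [Q_single] at hq1
      have := x0 a
      have := x1 a
      have := hM a
      by_cases hs : 0 ≤ (Q M y (ind {a}) + Q M (ind {a}) y) + M a a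
      · refine ⟨fun u => y u + 1 * ind {a} u, ?_, ?_, ?_, ?_⟩
        · intro v
          by_cases hv : v = a
          · simp [y, ind, hv]
          · simpa [y, ind, hv] using x0 v
        · intro v
          by_cases hv : v = a
          · simp [y, ind, hv]
          · simpa [y, ind, hv] using x1 v
        · intro v hv'
          by_cases hv : v = a
          · simp [y, ind, hv]
          · simpa [y, ind, hv] using xS v (Finset.mem_of_mem_insert_of_ne hv' hv)
        · rw [hq1]
          refine xQ.trans ?_
          rw [hq]
          nlinarith [mul_nonneg (mul_nonneg (x0 a) (sub_nonneg.2 (x1 a))) (hM a), mul_nonneg (sub_nonneg.2 (x1 a)) hs]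
      · refine ⟨y, ?_, ?_, ?_, ?_⟩
        · intro v
          by_cases hv : v = a
          · simp [y, hv]
          · simpa [y, hv] using x0 v
        · intro v
          by_cases hv : v = a
          · simp [y, hv]
          · simpa [y, hv] using x1 v
        · intro v hv'
          by_cases hv : v = a
          · simp [y, hv]
          · simpa [y, hv] using xS v (Finset.mem_of_mem_insert_of_ne hv' hv)
        · refine xQ.trans ?_
          rw [hq]
          push Not at hs
          nlinarith [mul_nonneg (mul_nonneg (x0 a) (sub_nonneg.2 (x1 a))) (hM a), mul_nonneg (x0 a) (neg_nonneg.2 hs.le)]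
  obtain ⟨x, -, -, xS, xQ⟩ := key Finset.univ
  refine ⟨Finset.univ.filter (fun v => x v = 1), ?_⟩
  have : ind (Finset.univ.filter (fun v => x v = 1)) = x := by
    funext v
    rcases xS v (Finset.mem_univ v) with h | h <;> simp [ind, h]
  rw [this]; exact xQ

lemma Q_ones (d : ℝ) (G : SimpleGraph V) (x y : V → ℝ) :
    Q (fun u v => d - adj G u v) x y = d * ((∑ u, x u) * ∑ v, y v) - Q (adj G) x y := by
  rw [Finset.sum_mul_sum]
  simp only [Q, Finset.mul_sum, ← Finset.sum_sub_distrib]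
  refine Finset.sum_congr rfl fun u _ => Finset.sum_congr rfl fun v _ => by ring

lemma sum_ind (Y : Finset V) : ∑ v, ind Y v = Y.card := by
  simp [ind]

lemma Q_adj_single (G : SimpleGraph V) (Y : Finset V) (v : V) :
    Q (adj G) (ind {v}) (ind Y) = (Y.filter (fun u => G.Adj v u)).card := by
  rw [← sum_adj]
  simp [Q, ind]

lemma Q_nonneg (G : SimpleGraph V) (Y : Finset V) : 0 ≤ Q (adj G) (ind Y) (ind Y) := by
  refine Finset.sum_nonneg fun u _ => Finset.sum_nonneg fun v _ => ?_
  have : ∀ v, 0 ≤ ind Y v := fun v => by unfold ind; split_ifs <;> norm_num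
  exact mul_nonneg (mul_nonneg (adj_nonneg _ _ _) (this u)) (this v)

lemma extract (G : SimpleGraph V) (d : ℝ) (hd : 0 < d) (U : Finset V) (s : ℝ) (hs : 0 < s)
    (hg : Good G (3 / 4 * d) U s) :
    ∃ X : Finset V, s / 2 ≤ X.card ∧
      ∀ v ∈ X, ((X.filter (fun u => G.Adj v u)).card : ℝ) ≤ d * X.card := by
  obtain ⟨μ, h0, h1, -, h3, h4⟩ := hg
  let M : V → V → ℝ := fun u v => d - adj G u v
  have hMs : ∀ u v, M u v = M v u := fun u v => by simp only [M]; rw [adj_symm]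
  have hMd : ∀ v, M v v = d := fun v => by simp [M, adj]
  obtain ⟨Y, hY⟩ := round M (fun v => by rw [hMd]; exact hd.le) (fun v => s * μ v)
    (fun v => mul_nonneg hs.le (h0 v)) (fun v => by rw [mul_comm]; exact h1 v)
  obtain ⟨X, -, hX⟩ := Finset.exists_max_image (Finset.univ : Finset (Finset V))
    (fun Y => Q M (ind Y) (ind Y)) ⟨∅, Finset.mem_univ _⟩
  refine ⟨X, ?_, ?_⟩
  · have h5 := hY.trans (hX Y (Finset.mem_univ _))
    rw [Q_smul_left, Q_smul_right, Q_ones, Q_ones, h3, sum_ind] at h5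
    have h6 := Q_nonneg G X
    have h7 : s * (s * (d / 4)) ≤ d * ((X.card : ℝ) * X.card) := by
      have : s * (s * (d / 4)) ≤ s * (s * (d * (1 * 1) - Q (adj G) μ μ)) := by
        gcongr; linarith
      linarith
    have h8 : (s / 2) ^ 2 ≤ (X.card : ℝ) ^ 2 := by
      have : d * (s / 2) ^ 2 ≤ d * (X.card : ℝ) ^ 2 := by nlinarith
      exact le_of_mul_le_mul_left this hd
    exact le_of_sq_le_sq h8 (by positivity)
  · intro v hv
    have h5 := hX (X.erase v) (Finset.mem_univ _)
    have h6 : ind (X.erase v) = fun u => ind X u + (-1) * ind {v} u := by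
      funext u
      by_cases hu : u = v
      · subst hu; simp [ind, hv]
      · simp [ind, hu]
    rw [h6, Q_line, Q_single, hMd, Q_symm M hMs (ind X) (ind {v}), Q_ones d G (ind {v}) (ind X), Q_adj_single, sum_ind, sum_ind] at h5
    simp only [Finset.card_singleton, Nat.cast_one] at h5
    linarith

lemma numeric (h : ℕ) (hh : 1 ≤ h) (d : ℝ) (hd0 : 0 < d) (hd : d ≤ 1 / 2) :
    ∃ t : ℕ, 1 / 4 ≤ (3 / 4 * d) * (3 / 4 * d) * (3 / 2 : ℝ) ^ t ∧
      (2 : ℝ) ^ (-(15 * (h : ℝ) * (Real.logb 2 (1 / d)) ^ 2)) ≤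
        ((3 / 16 * d) ^ h) ^ t / 2 := by
  set L := Real.logb 2 (1 / d) with hL
  have hdL : d = (2:ℝ) ^ (-L) := by
    rw [Real.rpow_neg (by norm_num), hL, Real.rpow_logb (by norm_num) (by norm_num) (by positivity)]
    simp
  have hL1 : 1 ≤ L := by
    rw [hL, Real.le_logb_iff_rpow_le (by norm_num) (by positivity), Real.rpow_one,
      le_div_iff₀ hd0]
    linarith
  have hceil : 2 ≤ ⌈4 * L⌉₊ := by
    have : (2:ℝ) ≤ ⌈4 * L⌉₊ := le_trans (by linarith) (Nat.le_ceil (4 * L))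
    exact_mod_cast this
  obtain ⟨t, ht⟩ := Nat.exists_eq_add_of_le hceil
  have ht1 : 4 * L ≤ t + 2 := by
    have := Nat.le_ceil (4 * L)
    rw [ht] at this; push_cast at this; linarith
  have ht2 : (t:ℝ) ≤ 4 * L - 1 := by
    have := Nat.ceil_lt_add_one (show 0 ≤ 4 * L by linarith)
    rw [ht] at this; push_cast at this; linarith
  refine ⟨t, ?_, ?_⟩
  · -- growth
    have h32 : (2:ℝ) ^ (1/2 : ℝ) ≤ 3 / 2 := by
      rw [← Real.sqrt_eq_rpow, Real.sqrt_le_left (by norm_num)]; norm_num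
    have e1 : (2:ℝ) ^ (2 * L) ≤ (3 / 2 : ℝ) ^ (t + 2) := by
      calc (2:ℝ) ^ (2 * L) ≤ (2:ℝ) ^ ((1/2 : ℝ) * ((t + 2 : ℕ) : ℝ)) := by
            apply Real.rpow_le_rpow_of_exponent_le (by norm_num)
            push_cast; linarith
        _ = ((2:ℝ) ^ (1/2 : ℝ)) ^ (t + 2) := by
            rw [Real.rpow_mul (by norm_num), Real.rpow_natCast]
        _ ≤ _ := by gcongr
    have e2 : d * d * (2:ℝ) ^ (2 * L) = 1 := by
      rw [hdL, ← Real.rpow_add (by norm_num), ← Real.rpow_add (by norm_num)]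
      ring_nf; simp
    have e3 : d * d * (2:ℝ) ^ (2 * L) ≤ d * d * (3 / 2 : ℝ) ^ (t + 2) := by gcongr
    rw [e2, pow_add] at e3
    nlinarith
  · have e1 : (2:ℝ) ^ (-(L + 5 / 2)) ≤ 3 / 16 * d := by
      have : (2:ℝ) ^ (-(5/2) : ℝ) ≤ 3 / 16 := by
        have h1 : ((2:ℝ) ^ (-(5/2) : ℝ)) ^ 2 = 1 / 32 := by
          rw [← Real.rpow_natCast, ← Real.rpow_mul (by norm_num)]
          norm_num
        apply le_of_sq_le_sq _ (by norm_num)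
        rw [h1]; norm_num
      calc (2:ℝ) ^ (-(L + 5 / 2)) = (2:ℝ) ^ (-(5/2) : ℝ) * (2:ℝ) ^ (-L) := by
            rw [← Real.rpow_add (by norm_num)]; ring_nf
        _ ≤ 3 / 16 * d := by rw [← hdL]; gcongr
    have e2 : (2:ℝ) ^ (-(L + 5 / 2) * ((h * t : ℕ) : ℝ)) ≤ ((3 / 16 * d) ^ h) ^ t := by
      rw [← pow_mul, Real.rpow_mul (by norm_num), Real.rpow_natCast]
      gcongr
    have hh' : (1:ℝ) ≤ h := by exact_mod_cast hh
    have e3 : (2:ℝ) ^ (-(15 * (h : ℝ) * L ^ 2)) ≤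
        (2:ℝ) ^ (-(L + 5 / 2) * ((h * t : ℕ) : ℝ) - 1) := by
      apply Real.rpow_le_rpow_of_exponent_le (by norm_num)
      push_cast
      have f1 : (L + 5/2) * t ≤ (L + 5/2) * (4 * L - 1) := by gcongr
      have f2 : (L + 5/2) * t + 1 ≤ 15 * L ^ 2 := by nlinarith
      have f3 : h * ((L + 5/2) * t + 1) ≤ h * (15 * L ^ 2) := by gcongr
      nlinarith
    refine e3.trans ?_
    rw [Real.rpow_sub_one (by norm_num)]
    gcongr

end RodlQ

/-- Quantitative Rödl theorem (Fox–Sudakov): for every graph `H` on `h` vertices and every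
`0 < d ≤ 1/2`, with `δ = 2 ^ (-15h(log(1/d))²)` (logs base 2), every `H`-free graph `G`
has a set `X` of at least `δ|V(G)|` vertices such that in one of `G[X]` or the complement
of `G` induced on `X`, every vertex has degree at most `d|X|`. -/
theorem rodl_quantitative (h : ℕ) (H : SimpleGraph (Fin h)) (d : ℝ)
    (hd0 : 0 < d) (hd : d ≤ 1 / 2) :
    ∀ (n : ℕ) (G : SimpleGraph (Fin n)), ¬ Nonempty (H ↪g G) →
      ∃ X : Finset (Fin n),
        (2 : ℝ) ^ (-(15 * (h : ℝ) * (Real.logb 2 (1 / d)) ^ 2)) * n ≤ (X.card : ℝ) ∧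
        ((∀ v ∈ X, ((X.filter (fun u => G.Adj v u)).card : ℝ) ≤ d * X.card) ∨
         (∀ v ∈ X, ((X.filter (fun u => Gᶜ.Adj v u)).card : ℝ) ≤ d * X.card)) := by
  intro n G hG
  rcases Nat.eq_zero_or_pos h with rfl | hh
  · exact absurd ⟨⟨⟨fun i => i.elim0, fun i => i.elim0⟩, fun {i} => i.elim0⟩⟩ hG
  rcases Nat.eq_zero_or_pos n with rfl | hn
  · exact ⟨∅, by simp, by simp⟩
  obtain ⟨t, ht1, ht2⟩ := RodlQ.numeric h hh d hd0 hd
  have hnpos : (0:ℝ) < n := by exact_mod_cast hn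
  haveI : Nonempty (Fin n) := ⟨⟨0, hn⟩⟩
  have hmain := RodlQ.main_ind G (3 / 16 * d) (by positivity) (by linarith) H hG t
    (3 / 4 * d) (3 / 4 * d) (by linarith) (by linarith) ht1 Finset.univ Finset.univ_nonempty
  have hcard : ((Finset.univ : Finset (Fin n)).card : ℝ) = n := by simp
  rw [hcard] at hmain
  have hsz : (2 : ℝ) ^ (-(15 * (h : ℝ) * (Real.logb 2 (1 / d)) ^ 2)) * n ≤
      ((3 / 16 * d) ^ h) ^ t * n / 2 := by
    have := mul_le_mul_of_nonneg_right ht2 hnpos.le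
    linarith
  rcases hmain with hg | hg
  · obtain ⟨X, hX1, hX2⟩ := RodlQ.extract G d hd0 _ _ (by positivity) hg
    exact ⟨X, hsz.trans hX1, Or.inl hX2⟩
  · obtain ⟨X, hX1, hX2⟩ := RodlQ.extract Gᶜ d hd0 _ _ (by positivity) hg
    exact ⟨X, hsz.trans hX1, Or.inr (by convert hX2)⟩
end
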